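/- arXiv:2509.20252 — 5 statements merged into one kernel-verified Lean document; each statement's English description precedes it below -/
import Mathlib

section
/- The set of affine rational points of the hyperelliptic curve C' : y² = 8x⁷ − 16x⁵ − 7x⁴ + 4x³ + 6x² + 4x + 1 is exactly {(0, 1), (0, −1), (−1, 0), (−1/2, 0), (1, 0)}: for x, y ∈ ℚ, y² = 8x⁷ − 16x⁵ − 7x⁴ + 4x³ + 6x² + 4x + 1 holds if and only if (x, y) is one of these five pairs. -/
lemma cop_of {x y : ℤ} (h : ∀ p : ℤ, Prime p → p ∣ x → p ∣ y → False) : IsCoprime x y := by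
  apply isCoprime_of_prime_dvd
  · rintro ⟨rfl, rfl⟩
    exact h 2 Int.prime_two (dvd_zero _) (dvd_zero _)
  · intro p hp h1 h2
    exact h p hp h1 h2

lemma cop_no {x y p : ℤ} (h : IsCoprime x y) (hp : Prime p) (h1 : p ∣ x) (h2 : p ∣ y) : False :=
  hp.not_isUnit (h.isUnit_of_dvd' h1 h2)

lemma sq_pos_of {x y c : ℤ} (h : IsCoprime x y) (e : x * y = c ^ 2) (hx : 0 < x) :
    ∃ r, x = r ^ 2 := by
  obtain ⟨r, hr | hr⟩ := Int.sq_of_isCoprime h e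
  · exact ⟨r, hr⟩
  · nlinarith [sq_nonneg r]

lemma four_of {x y c : ℤ} (h : IsCoprime x y) (e : x * y = c ^ 4) (hx : 0 < x) :
    ∃ r, x = r ^ 4 := by
  obtain ⟨r, u, hu⟩ := exists_associated_pow_of_mul_eq_pow' h e
  rcases Int.units_eq_one_or u with rfl | rfl
  · exact ⟨r, by simpa using hu.symm⟩
  · exfalso
    simp at hu
    have : 0 ≤ r ^ 4 := by positivity
    linarith

lemma odd_sq {x : ℤ} (h : Odd x) : x ^ 2 % 8 = 1 := by
  have := Int.eight_dvd_sq_sub_one_of_odd h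
  omega

lemma even_sq {x : ℤ} (h : Even x) : x ^ 2 % 4 = 0 := by
  obtain ⟨k, rfl⟩ := h
  ring_nf
  omega

lemma U_core {ε g h K R : ℤ} (hε : ε = 1 ∨ ε = -1) (hc : IsCoprime g h) (ho : Odd (g + h))
    (hK : K ≠ 0) (e1 : g * h = ε * K ^ 2) (e2 : g ^ 2 - g * h + h ^ 2 = R ^ 2) :
    ∃ G H : ℤ, Odd G ∧ Even H ∧ IsCoprime G H ∧ G ^ 4 - ε * G ^ 2 * H ^ 2 + H ^ 4 = R ^ 2 ∧
      G ^ 2 * H ^ 2 = K ^ 2 := by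
  have hεε : ε * ε = 1 := by rcases hε with rfl | rfl <;> norm_num
  have hc' : IsCoprime g (ε * h) := by
    rcases hε with rfl | rfl
    · simpa using hc
    · simpa using hc.neg_right
  have key : ∃ δ G H : ℤ, δ * δ = 1 ∧ g = δ * G ^ 2 ∧ h = δ * ε * H ^ 2 := by
    have e3 : g * (ε * h) = K ^ 2 := by linear_combination ε * e1 + K ^ 2 * hεε
    have e4 : (ε * h) * g = K ^ 2 := by linear_combination e3
    have hpos : 0 < K ^ 2 := by positivity
    obtain ⟨G, hG⟩ := Int.sq_of_isCoprime hc' e3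
    obtain ⟨H, hH⟩ := Int.sq_of_isCoprime hc'.symm e4
    have hh : h = ε * (ε * h) := by linear_combination -h * hεε
    rcases hG with hG | hG <;> rcases hH with hH | hH
    · exact ⟨1, G, H, by norm_num, by linarith, by rw [hh, hH]; ring⟩
    · exfalso; rw [hH, hG] at e3; nlinarith [sq_nonneg (G * H)]
    · exfalso; rw [hH, hG] at e3; nlinarith [sq_nonneg (G * H)]
    · exact ⟨-1, G, H, by norm_num, by linarith, by rw [hh, hH]; ring⟩
  obtain ⟨δ, G, H, hδ, rfl, rfl⟩ := key
  have eK : G ^ 2 * H ^ 2 = K ^ 2 := by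
    have : (ε * ε) * (δ * δ) * (G ^ 2 * H ^ 2) = (ε * ε) * K ^ 2 := by
      linear_combination ε * e1
    rw [hεε, hδ] at this; linarith
  have eR : G ^ 4 - ε * G ^ 2 * H ^ 2 + H ^ 4 = R ^ 2 := by
    have : (δ * δ) * G ^ 4 - (δ * δ) * ε * G ^ 2 * H ^ 2 + (δ * δ) * (ε * ε) * H ^ 4 = R ^ 2 := by
      linear_combination e2
    rw [hεε, hδ] at this; linarith
  have hGH : IsCoprime G H := by
    apply cop_of
    intro p hp h1 h2
    exact cop_no hc hp (Dvd.dvd.mul_left (dvd_pow h1 two_ne_zero) _)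
      (Dvd.dvd.mul_left (dvd_pow h2 two_ne_zero) _)
  have hpar : Odd (G + H) := by
    have h1 : δ = 1 ∨ δ = -1 := by
      have := mul_self_eq_one_iff.mp hδ
      exact this
    rcases hε with rfl | rfl <;> rcases h1 with rfl | rfl <;>
      simp [Int.odd_add, parity_simps] at ho ⊢ <;> tauto
  rcases Int.even_or_odd H with hH | hH
  · refine ⟨G, H, ?_, hH, hGH, eR, eK⟩
    rw [Int.odd_add] at hpar; tauto
  · refine ⟨H, G, hH, ?_, hGH.symm, by linear_combination eR, by linear_combination eK⟩
    rw [Int.odd_add'] at hpar; tauto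

lemma S_core {ε R K m n : ℤ} (hε : ε = 1 ∨ ε = -1) (hc : IsCoprime R K) (hR : Odd R) (hKe : Even K)
    (e1 : R ^ 2 - ε * K ^ 2 = m ^ 2) (e2 : R ^ 2 + 3 * ε * K ^ 2 = n ^ 2) :
    ∃ g h : ℤ, IsCoprime g h ∧ Odd (g + h) ∧ g * h = ε * K ^ 2 ∧ g ^ 2 - g * h + h ^ 2 = R ^ 2 := by
  have hm : Odd m := by
    have : Odd (m ^ 2) := by
      rw [← e1]; simp [Int.odd_sub, parity_simps, hR, hKe]
    exact (Int.odd_pow' two_ne_zero).mp this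
  have hn : Odd n := by
    have : Odd (n ^ 2) := by
      rw [← e2]; simp [Int.odd_add, parity_simps, hR, hKe]
    exact (Int.odd_pow' two_ne_zero).mp this
  obtain ⟨i, rfl⟩ := hm
  obtain ⟨j, rfl⟩ := hn
  have f1 : (j + i + 1) * (j - i) = ε * K ^ 2 := by linarith
  have f2 : (j + i + 1) ^ 2 - (j + i + 1) * (j - i) + (j - i) ^ 2 = R ^ 2 := by linarith
  refine ⟨j + i + 1, j - i, ?_, ⟨j, by ring⟩, f1, f2⟩
  apply cop_of
  intro p hp h1 h2
  refine cop_no hc hp ?_ ?_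
  · apply hp.dvd_of_dvd_pow (n := 2)
    rw [← f2]
    exact dvd_add (dvd_sub (dvd_pow h1 two_ne_zero) (h1.mul_right _)) (dvd_pow h2 two_ne_zero)
  · apply hp.dvd_of_dvd_pow (n := 2)
    have : K ^ 2 = ε * ((j + i + 1) * (j - i)) := by
      rw [f1]; rcases hε with rfl | rfl <;> ring
    rw [this]
    exact (h1.mul_right _).mul_left _

set_option maxHeartbeats 1000000 in
lemma T_main : ∀ N : ℕ, ∀ ε x y z : ℤ, (ε = 1 ∨ ε = -1) → y.natAbs = N → Odd x → Even y →
    IsCoprime x y → x ^ 4 - ε * x ^ 2 * y ^ 2 + y ^ 4 = z ^ 2 → y = 0 := by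
  intro N
  induction N using Nat.strong_induction_on with
  | _ N ih =>
  intro ε x y z hε hN hx hy hc e
  by_contra hy0
  have hεε : ε * ε = 1 := by rcases hε with rfl | rfl <;> norm_num
  obtain ⟨w, rfl⟩ := hy.two_dvd
  have hw : w ≠ 0 := by rintro rfl; simp at hy0
  have hzo : Odd z := by
    have : Odd (z ^ 2) := by
      rw [← e]; simp [Int.odd_add, Int.odd_sub, parity_simps, hx]
    exact (Int.odd_pow' two_ne_zero).mp this
  -- choose z positive
  obtain ⟨Z, hZ, hZo, eZ⟩ : ∃ Z : ℤ, 0 < Z ∧ Odd Z ∧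
      x ^ 4 - ε * x ^ 2 * (2 * w) ^ 2 + (2 * w) ^ 4 = Z ^ 2 := by
    refine ⟨|z|, ?_, ?_, by rw [sq_abs]; exact e⟩
    · apply abs_pos.mpr; rintro rfl; simp at hzo
    · rcases abs_choice z with h | h <;> rw [h]
      · exact hzo
      · exact hzo.neg
  have hx2 : Odd (x ^ 2) := hx.pow
  obtain ⟨i, hi⟩ := hx2
  obtain ⟨j, hj⟩ := hZo
  obtain ⟨A, hA⟩ : ∃ A, A = j - i + ε * w ^ 2 := ⟨_, rfl⟩
  obtain ⟨B, hB⟩ : ∃ B, B = j + i + 1 - ε * w ^ 2 := ⟨_, rfl⟩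
  have hsum : A + B = Z := by rw [hA, hB, hj]; ring
  have hdif : B - A = x ^ 2 - 2 * ε * w ^ 2 := by rw [hA, hB, hi]; ring
  have hprod : A * B = 3 * w ^ 4 := by
    have : 4 * (A * B) = (A + B) ^ 2 - (B - A) ^ 2 := by ring
    rw [hsum, hdif, ← eZ] at this
    have h2 : 4 * (A * B) = 4 * (3 * w ^ 4) := by
      rw [this]; linear_combination (-4 * w ^ 4) * hεε
    linarith
  have hw4 : 0 < w ^ 4 := by positivity
  have hAB : 0 < A ∧ 0 < B := by
    have h1 : 0 < A * B := by rw [hprod]; linarith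
    rcases pos_and_pos_or_neg_and_neg_of_mul_pos h1 with h | h
    · exact h
    · linarith [h.1, h.2]
  have hcAB : IsCoprime A B := by
    apply cop_of
    intro p hp h1 h2
    have hpw : p ∣ w := by
      have h3 : p ∣ 3 * w ^ 4 := by rw [← hprod]; exact h1.mul_right _
      rcases hp.dvd_or_dvd h3 with h3 | h3
      · have has : Associated p 3 := hp.associated_of_dvd Int.prime_three h3
        have hA3 : (3 : ℤ) ∣ A := has.dvd_iff_dvd_left.mp h1
        have hB3 : (3 : ℤ) ∣ B := has.dvd_iff_dvd_left.mp h2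
        have h9 : (3 : ℤ) * 3 ∣ 3 * w ^ 4 := by rw [← hprod]; exact mul_dvd_mul hA3 hB3
        have := (mul_dvd_mul_iff_left (by norm_num : (3 : ℤ) ≠ 0)).mp h9
        exact h3.trans (Int.prime_three.dvd_of_dvd_pow this)
      · exact hp.dvd_of_dvd_pow h3
    refine cop_no hc hp ?_ (hpw.mul_left 2)
    apply hp.dvd_of_dvd_pow (n := 2)
    have : x ^ 2 = B - A + 2 * ε * w ^ 2 := by rw [hdif]; ring
    rw [this]
    exact dvd_add (dvd_sub h2 h1) (Dvd.dvd.mul_left (dvd_pow hpw two_ne_zero) _)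
  have hx8 := odd_sq hx
  have h3 : (3 : ℤ) ∣ A * B := ⟨_, hprod⟩
  have sqof : ∀ s t : ℤ, s ^ 4 * t ^ 4 = w ^ 4 → w ^ 2 = s ^ 2 * t ^ 2 := by
    intro s t h
    have : (s ^ 2 * t ^ 2) ^ 2 = (w ^ 2) ^ 2 := by linear_combination h
    exact ((pow_left_inj₀ (by positivity) (by positivity) two_ne_zero).mp this).symm
  rcases Int.prime_three.dvd_or_dvd h3 with ⟨A', hA'⟩ | ⟨B', hB'⟩
  · rw [hA'] at hprod hAB hcAB
    have hp' : A' * B = w ^ 4 := by linarith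
    have hc' : IsCoprime A' B := hcAB.of_mul_left_right
    obtain ⟨s, hs⟩ := four_of hc' hp' (by linarith [hAB.1])
    obtain ⟨t, ht⟩ := four_of hc'.symm (by rw [mul_comm]; exact hp') hAB.2
    have hwst := sqof s t (by rw [← hs, ← ht, hp'])
    have ex : x ^ 2 = (t ^ 2 - ε * s ^ 2) * (t ^ 2 + 3 * ε * s ^ 2) := by
      have : t ^ 4 - 3 * s ^ 4 = x ^ 2 - 2 * ε * (s ^ 2 * t ^ 2) := by
        rw [← hwst, ← hdif, hA', hs, ht]
      linear_combination -this + 3 * s ^ 4 * hεε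
    have hcst : IsCoprime t s := by
      rw [hs, ht] at hc'
      exact (IsCoprime.pow_iff (by norm_num) (by norm_num)).mp hc'.symm
    have hpar : Odd t ∧ Even s := by
      have hor : Odd ((t ^ 2 - ε * s ^ 2) * (t ^ 2 + 3 * ε * s ^ 2)) := by rw [← ex]; exact hx.pow
      have hor2 := (Int.odd_mul.mp hor).1
      rcases Int.even_or_odd t with ht2 | ht2
      · exfalso
        have hs2 : Odd s := by
          have : Odd ε := by rcases hε with rfl | rfl <;> decide
          by_contra hne
          rw [Int.not_odd_iff_even] at hne
          simp [Int.odd_sub, parity_simps, hne] at hor2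
          exact (Int.not_even_iff_odd.mpr hor2) ht2
        have a1 := even_sq ht2
        have a2 := odd_sq hs2
        obtain ⟨α, hα⟩ : ∃ α, t ^ 2 = 4 * α := ⟨t ^ 2 / 4, by omega⟩
        obtain ⟨β, hβ⟩ : ∃ β, s ^ 2 = 8 * β + 1 := ⟨s ^ 2 / 8, by omega⟩
        rw [hα, hβ] at ex
        have : x ^ 2 = 8 * (2 * α ^ 2 + ε * α * (8 * β + 1) - 24 * β ^ 2 - 6 * β) - 3 := by
          rw [ex]; linear_combination (-3 * (8 * β + 1) ^ 2) * hεε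
        omega
      · refine ⟨ht2, ?_⟩
        have : Odd ε := by rcases hε with rfl | rfl <;> decide
        by_contra hne
        rw [Int.not_even_iff_odd] at hne
        have : Even (t ^ 2 - ε * s ^ 2) := by
          apply Odd.sub_odd ht2.pow (this.mul hne.pow)
        exact (Int.not_even_iff_odd.mpr hor2) this
    have hs0 : s ≠ 0 := by rintro rfl; simp at hwst; exact hw hwst
    have ht0 : t ≠ 0 := by rintro rfl; simp at hwst; exact hw hwst
    obtain ⟨P, hP⟩ : ∃ P, P = t ^ 2 - ε * s ^ 2 := ⟨_, rfl⟩
    obtain ⟨Q, hQ⟩ : ∃ Q, Q = t ^ 2 + 3 * ε * s ^ 2 := ⟨_, rfl⟩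
    rw [← hP, ← hQ] at ex
    have hPQ : IsCoprime P Q := by
      apply cop_of
      intro p hp h1 h2
      have h4 : p ∣ 2 ^ 2 * t ^ 2 := by
        have : 2 ^ 2 * t ^ 2 = 3 * P + Q := by rw [hP, hQ]; ring
        rw [this]; exact dvd_add (h1.mul_left _) h2
      have h5 : p ∣ 2 ^ 2 * s ^ 2 := by
        have : 2 ^ 2 * s ^ 2 = ε * (Q - P) := by
          rw [hP, hQ]; linear_combination (-4 * s ^ 2) * hεε
        rw [this]; exact (dvd_sub h2 h1).mul_left _
      have hPo : Odd P := by
        have : Odd (P * Q) := by rw [← ex]; exact hx.pow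
        exact (Int.odd_mul.mp this).1
      have hp2 : ¬ p ∣ 2 ^ 2 := by
        intro h
        have h := hp.dvd_of_dvd_pow h
        have has : Associated p 2 := hp.associated_of_dvd Int.prime_two h
        have : (2 : ℤ) ∣ P := has.dvd_iff_dvd_left.mp h1
        obtain ⟨k, hk⟩ := hPo
        omega
      exact cop_no hcst hp (hp.dvd_of_dvd_pow ((hp.dvd_or_dvd h4).resolve_left hp2))
        (hp.dvd_of_dvd_pow ((hp.dvd_or_dvd h5).resolve_left hp2))
    have hPQpos : 0 < P ∧ 0 < Q := by
      have : 0 < P * Q := by rw [← ex]; have : x ≠ 0 := by rintro rfl; simp at hx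
                             positivity
      rcases pos_and_pos_or_neg_and_neg_of_mul_pos this with h | h
      · exact h
      · nlinarith [h.1, h.2, sq_nonneg t]
    obtain ⟨m, hm⟩ := sq_pos_of hPQ ex.symm hPQpos.1
    obtain ⟨n, hn⟩ := sq_pos_of hPQ.symm (by rw [mul_comm]; exact ex.symm) hPQpos.2
    obtain ⟨g, h, c1, c2, c3, c4⟩ := S_core hε hcst hpar.1 hpar.2 (hP.symm.trans hm) (hQ.symm.trans hn)
    obtain ⟨G, H, d1, d2, d3, d4, d5⟩ := U_core hε c1 c2 hs0 c3 c4
    have hH0 : H ≠ 0 := by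
      rintro rfl; simp at d5; exact hs0 (pow_eq_zero_iff two_ne_zero |>.mp d5.symm)
    have hG0 : G ≠ 0 := by
      rintro rfl; simp at d1
    refine hH0 (ih H.natAbs ?_ ε G H t hε rfl d1 d2 d3 d4)
    rw [← hN]
    rw [Int.natAbs_lt_iff_sq_lt]
    have g1 : 1 ≤ G ^ 2 := by have : 0 < G ^ 2 := by positivity
                              linarith
    have g2 : 1 ≤ t ^ 2 := by have : 0 < t ^ 2 := by positivity
                              linarith
    have g3 : 0 < s ^ 2 := by positivity
    have : H ^ 2 ≤ s ^ 2 := by nlinarith [sq_nonneg H]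
    have : s ^ 2 ≤ w ^ 2 := by rw [hwst]; nlinarith
    have : 0 < w ^ 2 := by positivity
    linarith [mul_pow 2 w 2]
  · exfalso
    rw [hB'] at hprod hAB hcAB
    have hp' : A * B' = w ^ 4 := by linarith
    have hc' : IsCoprime A B' := hcAB.of_mul_right_right
    obtain ⟨s, hs⟩ := four_of hc' hp' hAB.1
    obtain ⟨t, ht⟩ := four_of hc'.symm (by rw [mul_comm]; exact hp') (by linarith [hAB.2])
    have hwst := sqof s t (by rw [← hs, ← ht, hp'])
    have ex : x ^ 2 = 3 * (t ^ 2) ^ 2 - (s ^ 2) ^ 2 + 2 * ε * (s ^ 2 * t ^ 2) := by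
      rw [← hwst]
      have : 3 * t ^ 4 - s ^ 4 = x ^ 2 - 2 * ε * w ^ 2 := by
        rw [← hdif, hB', hs, ht]
      linear_combination -this
    have hor : Odd (t + s) := by
      have : Odd (x ^ 2) := hx.pow
      rw [ex] at this
      simp [Int.odd_add, Int.odd_sub, parity_simps] at this ⊢
      have h3 : Odd (3 * (t ^ 2) ^ 2) ↔ Odd t := by
        have h3' : Odd (3 : ℤ) := by decide
        simp [Int.odd_mul, Int.odd_pow, h3']
      tauto
    have h4 : t ^ 2 % 4 = 0 ∧ s ^ 2 % 4 = 1 ∨ t ^ 2 % 4 = 1 ∧ s ^ 2 % 4 = 0 := by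
      rcases Int.even_or_odd t with h | h
      · have h' : Odd s := by rw [Int.odd_add'] at hor; tauto
        have := even_sq h
        have := odd_sq h'
        omega
      · have h' : Even s := by rw [Int.odd_add] at hor; tauto
        have := odd_sq h
        have := even_sq h'
        omega
    generalize t ^ 2 = a at *
    generalize s ^ 2 = b at *
    rcases h4 with ⟨h1, h2⟩ | ⟨h1, h2⟩
    · obtain ⟨α, rfl⟩ : ∃ α, a = 4 * α := ⟨a / 4, by omega⟩
      obtain ⟨β, rfl⟩ : ∃ β, b = 4 * β + 1 := ⟨b / 4, by omega⟩
      have : x ^ 2 = 4 * (12 * α ^ 2 - 4 * β ^ 2 - 2 * β + 2 * ε * ((4 * β + 1) * α)) - 1 := by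
        rw [ex]; ring
      omega
    · obtain ⟨α, rfl⟩ : ∃ α, a = 4 * α + 1 := ⟨a / 4, by omega⟩
      obtain ⟨β, rfl⟩ : ∃ β, b = 4 * β := ⟨b / 4, by omega⟩
      have : x ^ 2 = 4 * (12 * α ^ 2 + 6 * α - 4 * β ^ 2 + 2 * ε * (β * (4 * α + 1))) + 3 := by
        rw [ex]; ring
      omega

lemma U_fin {ε g h K R : ℤ} (hε : ε = 1 ∨ ε = -1) (hc : IsCoprime g h) (ho : Odd (g + h))
    (e1 : g * h = ε * K ^ 2) (e2 : g ^ 2 - g * h + h ^ 2 = R ^ 2) : K = 0 := by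
  by_contra hK
  obtain ⟨G, H, d1, d2, d3, d4, d5⟩ := U_core hε hc ho hK e1 e2
  have := T_main _ ε G H R hε rfl d1 d2 d3 d4
  subst this
  simp at d5
  exact hK (pow_eq_zero_iff two_ne_zero |>.mp d5.symm)

lemma S_fin {ε R K m n : ℤ} (hε : ε = 1 ∨ ε = -1) (hc : IsCoprime R K) (hR : Odd R) (hKe : Even K)
    (e1 : R ^ 2 - ε * K ^ 2 = m ^ 2) (e2 : R ^ 2 + 3 * ε * K ^ 2 = n ^ 2) : K = 0 := by
  obtain ⟨g, h, c1, c2, c3, c4⟩ := S_core hε hc hR hKe e1 e2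
  exact U_fin hε c1 c2 c3 c4

lemma cop_n {a b x y : ℤ} (k α β γ δ : ℤ) (hc : IsCoprime a b) (hk : IsCoprime k x)
    (h1 : k * a = α * x + β * y) (h2 : k * b = γ * x + δ * y) : IsCoprime x y := by
  apply cop_of
  intro p hp hx hy
  have hpk : ¬ p ∣ k := fun h => cop_no hk hp h hx
  have d1 : p ∣ k * a := by rw [h1]; exact dvd_add (hx.mul_left _) (hy.mul_left _)
  have d2 : p ∣ k * b := by rw [h2]; exact dvd_add (hx.mul_left _) (hy.mul_left _)
  exact cop_no hc hp ((hp.dvd_or_dvd d1).resolve_left hpk) ((hp.dvd_or_dvd d2).resolve_left hpk)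

lemma cop_two {x : ℤ} (h : Odd x) : IsCoprime 2 x := by
  rw [Int.prime_two.irreducible.coprime_iff_not_dvd]
  obtain ⟨k, rfl⟩ := h
  omega

lemma cop_three {x : ℤ} (h : ¬ (3 : ℤ) ∣ x) : IsCoprime 3 x := by
  rwa [Int.prime_three.irreducible.coprime_iff_not_dvd]

lemma sp3 {a b x y c : ℤ} (α β γ δ : ℤ) (hc : IsCoprime a b)
    (h1 : 3 * a = α * x + β * y) (h2 : 3 * b = γ * x + δ * y) (hx : 0 < x) (hy : 0 < y)
    (e : x * y = c ^ 2) :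
    (∃ m k, x = m ^ 2 ∧ y = k ^ 2) ∨ (∃ m k, x = 3 * m ^ 2 ∧ y = 3 * k ^ 2) := by
  have aux : IsCoprime x y → (∃ m k, x = m ^ 2 ∧ y = k ^ 2) := by
    intro h
    obtain ⟨m, hm⟩ := sq_pos_of h e hx
    obtain ⟨k, hk⟩ := sq_pos_of h.symm (by rw [mul_comm]; exact e) hy
    exact ⟨m, k, hm, hk⟩
  by_cases h3 : (3 : ℤ) ∣ x
  · by_cases h4 : (3 : ℤ) ∣ y
    · right
      obtain ⟨x', rfl⟩ := h3
      obtain ⟨y', rfl⟩ := h4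
      have hc3 : (3 : ℤ) ∣ c := by
        apply Int.prime_three.dvd_of_dvd_pow (n := 2)
        exact ⟨3 * (x' * y'), by rw [← e]; ring⟩
      obtain ⟨c', rfl⟩ := hc3
      have e' : x' * y' = c' ^ 2 := by nlinarith
      have hcop : IsCoprime x' y' := by
        apply cop_n 1 α β γ δ hc isCoprime_one_left
        · linarith
        · linarith
      obtain ⟨m, hm⟩ := sq_pos_of hcop e' (by linarith)
      obtain ⟨k, hk⟩ := sq_pos_of hcop.symm (by rw [mul_comm]; exact e') (by linarith)
      exact ⟨m, k, by rw [hm], by rw [hk]⟩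
    · left
      apply aux
      exact (cop_n 3 β α δ γ hc (cop_three h4) (by linarith) (by linarith)).symm
  · left
    apply aux
    exact cop_n 3 α β γ δ hc (cop_three h3) h1 h2

lemma ap_core {α b g h U : ℤ} (hg : Odd g) (hgh : IsCoprime g h)
    (e1 : g ^ 2 * h ^ 2 = 16 * α ^ 2) (e2 : U = g ^ 2 + 2 * h ^ 2) (e3 : U ^ 2 = b * (8 * α + b)) :
    α = 0 := by
  have e4 : (g ^ 2 + h ^ 2) * (g ^ 2 + 4 * h ^ 2) = (b + 4 * α) ^ 2 := by
    rw [e2] at e3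
    linear_combination e3 + e1
  have hg0 : g ≠ 0 := by rintro rfl; simp at hg
  have hp : 0 < g ^ 2 := by positivity
  have hs : IsCoprime (g ^ 2) (h ^ 2) := hgh.pow
  have h3 : ¬ (3 : ℤ) ∣ g ^ 2 + h ^ 2 := by
    intro hd
    have key : ∀ u : ℤ, u ^ 2 % 3 = 0 ∧ 3 ∣ u ∨ u ^ 2 % 3 = 1 := by
      intro u
      have : u % 3 = 0 ∨ u % 3 = 1 ∨ u % 3 = 2 := by omega
      rcases this with h | h | h
      · left; exact ⟨by simp [pow_two, Int.mul_emod, h], by omega⟩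
      · right; simp [pow_two, Int.mul_emod, h]
      · right; simp [pow_two, Int.mul_emod, h]
    rcases key g with ⟨a1, a2⟩ | a1 <;> rcases key h with ⟨b1, b2⟩ | b1
    · exact cop_no hgh Int.prime_three a2 b2
    all_goals omega
  have hcc : IsCoprime (g ^ 2 + h ^ 2) (g ^ 2 + 4 * h ^ 2) :=
    cop_n 3 4 (-1) (-1) 1 hs (cop_three h3) (by ring) (by ring)
  obtain ⟨R, hR⟩ := sq_pos_of hcc e4 (by positivity)
  obtain ⟨V, hV⟩ := sq_pos_of hcc.symm (by rw [mul_comm]; exact e4) (by positivity)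
  have hh : Even h := by
    have : Even (g ^ 2 * h ^ 2) := by rw [e1]; exact ⟨8 * α ^ 2, by ring⟩
    rw [Int.even_mul] at this
    rcases this with h' | h'
    · exact absurd h' (Int.not_even_iff_odd.mpr hg.pow)
    · exact (Int.even_pow' two_ne_zero).mp h'
  have hRo : Odd R := by
    have : Odd (R ^ 2) := by rw [← hR]; exact hg.pow.add_even (hh.pow_of_ne_zero two_ne_zero)
    exact (Int.odd_pow' two_ne_zero).mp this
  have hRh : IsCoprime R h := by
    have : IsCoprime (R ^ 2) (h ^ 2) :=
      cop_n 1 1 (-1) 0 1 hs isCoprime_one_left (by rw [← hR]; ring) (by ring)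
    exact (IsCoprime.pow_iff (by norm_num) (by norm_num)).mp this
  have h0 : h = 0 := S_fin (ε := 1) (Or.inl rfl) hRh hRo hh (m := g) (n := V)
    (by rw [← hR]; ring) (by rw [← hR, ← hV]; ring)
  subst h0
  have : α ^ 2 = 0 := by linarith
  exact pow_eq_zero_iff two_ne_zero |>.mp this

lemma ap_fin {a b r n m k : ℤ} (hc : IsCoprime a b) (hb : Odd b) (ha : (8 : ℤ) ∣ a)
    (h1 : b = r ^ 2) (h2 : a + b = n ^ 2) (h3 : b - a = m ^ 2) (h4 : 2 * a + b = k ^ 2) :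
    a = 0 := by
  obtain ⟨α, rfl⟩ := ha
  by_contra hne
  have hα : α ≠ 0 := by rintro rfl; simp at hne
  obtain ⟨U, hU⟩ : ∃ U, U = |r * n| := ⟨_, rfl⟩
  obtain ⟨V, hV⟩ : ∃ V, V = |m * k| := ⟨_, rfl⟩
  have hU2 : U ^ 2 = b * (8 * α + b) := by rw [hU, sq_abs, mul_pow, ← h1, ← h2]
  have hV2 : V ^ 2 = (b - 8 * α) * (2 * (8 * α) + b) := by rw [hV, sq_abs, mul_pow, ← h3, ← h4]
  have hU0 : 0 ≤ U := by rw [hU]; positivity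
  have hV0 : 0 ≤ V := by rw [hV]; positivity
  have o1 : Odd (8 * α + b) := Even.add_odd ⟨4 * α, by ring⟩ hb
  have o2 : Odd (b - 8 * α) := hb.sub_even ⟨4 * α, by ring⟩
  have o3 : Odd (2 * (8 * α) + b) := by simp [Int.odd_add', hb, parity_simps]
  have hUo : Odd U := by
    have : Odd (U ^ 2) := by rw [hU2]; exact hb.mul o1
    exact (Int.odd_pow' two_ne_zero).mp this
  have hVo : Odd V := by
    have : Odd (V ^ 2) := by rw [hV2]; exact o2.mul o3
    exact (Int.odd_pow' two_ne_zero).mp this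
  have hcUV : IsCoprime U V := by
    have : IsCoprime (U ^ 2) (V ^ 2) := by
      rw [hU2, hV2]
      refine IsCoprime.mul_left (IsCoprime.mul_right ?_ ?_) (IsCoprime.mul_right ?_ ?_)
      · exact cop_n 1 1 (-1) 1 0 hc isCoprime_one_left (by ring) (by ring)
      · exact cop_n 2 (-1) 1 2 0 hc (cop_two hb) (by ring) (by ring)
      · exact cop_n 2 1 (-1) 1 1 hc (cop_two o1) (by ring) (by ring)
      · exact cop_n 1 (-1) 1 2 (-1) hc isCoprime_one_left (by ring) (by ring)
    exact (IsCoprime.pow_iff (by norm_num) (by norm_num)).mp this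
  obtain ⟨i, hi⟩ := hUo
  obtain ⟨j, hj⟩ := hVo
  obtain ⟨e, he⟩ : ∃ e, e = i - j := ⟨_, rfl⟩
  obtain ⟨f, hf⟩ : ∃ f, f = i + j + 1 := ⟨_, rfl⟩
  have hsum : e + f = U := by rw [he, hf, hi]; ring
  have hdif : f - e = V := by rw [he, hf, hj]; ring
  have hprod : e * f = 32 * α ^ 2 := by
    have : 4 * (e * f) = U ^ 2 - V ^ 2 := by rw [← hsum, ← hdif]; ring
    rw [hU2, hV2] at this
    linarith
  have hα2 : 0 < α ^ 2 := by positivity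
  have hpos : 0 < e ∧ 0 < f := by
    have h1 : 0 < e * f := by rw [hprod]; linarith
    rcases pos_and_pos_or_neg_and_neg_of_mul_pos h1 with h | h
    · exact h
    · linarith [h.1, h.2]
  have hcef : IsCoprime e f :=
    cop_n 1 1 1 (-1) 1 hcUV isCoprime_one_left (by rw [← hsum]; ring) (by rw [← hdif]; ring)
  have hodd : Odd (e + f) := by rw [hsum, hi]; exact ⟨i, rfl⟩
  have main : ∀ e f : ℤ, 0 < e → 0 < f → IsCoprime e f → e * f = 32 * α ^ 2 → e + f = U →
      Odd f → Even e → False := by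
    intro e f he hf hc hp hs hfo hee
    obtain ⟨e', rfl⟩ := hee.two_dvd
    have hc' : IsCoprime e' f := hc.of_mul_left_right
    have hp' : e' * f = (4 * α) ^ 2 := by linarith
    obtain ⟨h, hh⟩ := sq_pos_of hc' hp' (by linarith)
    obtain ⟨g, hg⟩ := sq_pos_of hc'.symm (by rw [mul_comm]; exact hp') hf
    apply hα
    apply ap_core (g := g) (h := h) (U := U) (b := b)
    · rw [hg] at hfo; exact (Int.odd_pow' two_ne_zero).mp hfo
    · rw [hg, hh] at hc'
      exact (IsCoprime.pow_iff (by norm_num) (by norm_num)).mp hc'.symm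
    · rw [← hg, ← hh]; linarith
    · rw [← hg, ← hh]; linarith
    · exact hU2
  rcases Int.even_or_odd e with h | h
  · have : Odd f := by rw [Int.odd_add'] at hodd; tauto
    exact main e f hpos.1 hpos.2 hcef hprod hsum this h
  · have : Even f := by rw [Int.odd_add] at hodd; tauto
    exact main f e hpos.2 hpos.1 hcef.symm (by linarith) (by linarith) h this

/-- case `d = 1` -/
lemma case_pos {a b s t : ℤ} (hc : IsCoprime a b) (hb : 0 < b)
    (hN : b * (a + b) * (a - b) * (2 * a + b) = s ^ 2) (hs : s ≠ 0)
    (hq : 4 * a ^ 4 - 2 * a ^ 3 * b - 3 * a ^ 2 * b ^ 2 - 2 * a * b ^ 3 - b ^ 4 = t ^ 2) :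
    False := by
  have hspos : 0 < s ^ 2 := by positivity
  have h3 : ¬ (3 : ℤ) ∣ a - b := by
    rintro ⟨k, hk⟩
    have ha : a = b + 3 * k := by linarith
    have hb3 : ¬ (3 : ℤ) ∣ b := by
      intro h
      exact cop_no hc Int.prime_three (by omega) h
    subst ha
    have hb1 : b % 3 = 1 ∨ b % 3 = 2 := by omega
    have ht : t % 3 = 0 ∨ t % 3 = 1 ∨ t % 3 = 2 := by omega
    have hmod := congrArg (fun z : ℤ => (z : ZMod 3)) hq
    have hall : ∀ b k t : ZMod 3, 4 * (b + 3 * k) ^ 4 - 2 * (b + 3 * k) ^ 3 * b -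
      3 * (b + 3 * k) ^ 2 * b ^ 2 - 2 * (b + 3 * k) * b ^ 3 - b ^ 4 = t ^ 2 → b = 0 := by decide
    push_cast at hmod
    have := hall _ _ _ hmod
    exact hb3 ((ZMod.intCast_zmod_eq_zero_iff_dvd b 3).mp this)
  have h3D : ¬ (3 : ℤ) ∣ 2 * a + b := by omega
  have hCpos : 0 < a + b := by
    by_contra hle
    have hC : a + b < 0 := by
      rcases lt_or_eq_of_le (not_lt.mp hle) with h | h
      · exact h
      · rw [h] at hN; simp at hN; exact absurd hN.symm hspos.ne'
    have h1 : 0 < (a - b) * (2 * a + b) := mul_pos_of_neg_of_neg (by linarith) (by linarith)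
    have h2 : b * (a + b) < 0 := mul_neg_of_pos_of_neg hb hC
    nlinarith [mul_neg_of_neg_of_pos h2 h1]
  have hAD : 0 < (a - b) * (2 * a + b) := by
    have h2 : 0 < b * (a + b) := mul_pos hb hCpos
    by_contra hle
    nlinarith [mul_nonneg h2.le (neg_nonneg.mpr (not_lt.mp hle))]
  have cBC : IsCoprime b (a + b) := cop_n 1 (-1) 1 1 0 hc isCoprime_one_left (by ring) (by ring)
  have cBA : IsCoprime b (a - b) := cop_n 1 1 1 1 0 hc isCoprime_one_left (by ring) (by ring)
  have cCD : IsCoprime (a + b) (2 * a + b) :=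
    cop_n 1 (-1) 1 2 (-1) hc isCoprime_one_left (by ring) (by ring)
  have cAD : IsCoprime (a - b) (2 * a + b) :=
    cop_n 3 1 1 (-2) 1 hc (cop_three h3) (by ring) (by ring)
  rcases Int.even_or_odd b with hbe | hbo
  · -- b even, a odd
    obtain ⟨c, rfl⟩ := hbe.two_dvd
    have hao : Odd a := by
      by_contra h
      rw [Int.not_odd_iff_even] at h
      exact cop_no hc Int.prime_two h.two_dvd ⟨c, rfl⟩
    have hs2 : Even s := by
      have : Even (s ^ 2) := by rw [← hN]; simp [parity_simps]
      exact (Int.even_pow' two_ne_zero).mp this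
    obtain ⟨s', rfl⟩ := hs2.two_dvd
    have hN' : c * (a + 2 * c) * (a - 2 * c) * (a + c) = s' ^ 2 := by nlinarith
    have hCo : Odd (a + 2 * c) := by simp [Int.odd_add, hao, parity_simps]
    have hAo : Odd (a - 2 * c) := by simp [Int.odd_sub, hao, parity_simps]
    have c1 : IsCoprime c (a + 2 * c) := cBC.of_mul_left_right
    have c2 : IsCoprime c (a - 2 * c) := cBA.of_mul_left_right
    have c3 : IsCoprime c (a + c) := cop_n 1 (-1) 1 2 0 hc isCoprime_one_left (by ring) (by ring)
    have c4 : IsCoprime (a + 2 * c) (a - 2 * c) :=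
      cop_n 2 1 1 1 (-1) hc (cop_two hCo) (by ring) (by ring)
    have c5 : IsCoprime (a + 2 * c) (a + c) :=
      cop_n 1 (-1) 2 2 (-2) hc isCoprime_one_left (by ring) (by ring)
    have c6 : IsCoprime (a - 2 * c) (a + c) :=
      cop_n 3 1 2 (-2) 2 hc (cop_three h3) (by ring) (by ring)
    obtain ⟨r, hr⟩ := sq_pos_of ((c1.mul_right c2).mul_right c3) (c := s')
      (by linarith) (by linarith)
    obtain ⟨n, hn⟩ := sq_pos_of ((c1.symm.mul_right c4).mul_right c5) (c := s')
      (by linarith) (by linarith)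
    have e6 := Int.sq_of_isCoprime ((c2.symm.mul_right c4.symm).mul_right c6) (c := s')
      (by linarith)
    have e7 := Int.sq_of_isCoprime ((c3.symm.mul_right c5.symm).mul_right c6.symm) (c := s')
      (by linarith)
    have hno : Odd n := by rw [hn] at hCo; exact (Int.odd_pow' two_ne_zero).mp hCo
    have hn8 := odd_sq hno
    obtain ⟨m, hm | hm⟩ := e6
    · have hmo : Odd m := by rw [hm] at hAo; exact (Int.odd_pow' two_ne_zero).mp hAo
      obtain ⟨k, hk | hk⟩ := e7
      · obtain ⟨i, rfl⟩ := hno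
        obtain ⟨j, rfl⟩ := hmo
        have f1 : (i + j + 1) * (i - j) = r ^ 2 := by rw [← hr]; linarith
        have f2 : (i + j + 1) ^ 2 + (i + j + 1) * (i - j) + (i - j) ^ 2 = k ^ 2 := by
          rw [← hk]; linarith
        have hcn : IsCoprime (2 * i + 1) (2 * j + 1) := by
          rw [hn, hm] at c4
          exact (IsCoprime.pow_iff (by norm_num) (by norm_num)).mp c4
        have hcg : IsCoprime (i + j + 1) (-(i - j)) :=
          cop_n 1 1 (-1) 1 1 hcn isCoprime_one_left (by ring) (by ring)
        have r0 : r = 0 := U_fin (ε := -1) (R := k) (Or.inr rfl) hcg ⟨j, by ring⟩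
          (by linarith) (by linarith)
        rw [r0] at hr
        simp at hr; omega
      · rw [hm] at hAD
        nlinarith [sq_nonneg m, sq_nonneg k, mul_nonneg (sq_nonneg m) (sq_nonneg k)]
    · have hmo : Odd m := by
        rw [hm] at hAo; exact (Int.odd_pow' two_ne_zero).mp (by simpa using hAo.neg)
      have hm8 := odd_sq hmo
      omega
  · rcases Int.even_or_odd a with hae | hao
    · have hCo : Odd (a + b) := hae.add_odd hbo
      have hAo : Odd (a - b) := hae.sub_odd hbo
      have c3 : IsCoprime b (2 * a + b) :=
        cop_n 2 (-1) 1 2 0 hc (cop_two hbo) (by ring) (by ring)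
      have c4 : IsCoprime (a + b) (a - b) :=
        cop_n 2 1 1 1 (-1) hc (cop_two hCo) (by ring) (by ring)
      obtain ⟨r, hr⟩ := sq_pos_of ((cBC.mul_right cBA).mul_right c3) (c := s)
        (by linarith) (by linarith)
      obtain ⟨n, hn⟩ := sq_pos_of ((cBC.symm.mul_right c4).mul_right cCD) (c := s)
        (by linarith) (by linarith)
      obtain ⟨m, hm⟩ := Int.sq_of_isCoprime ((cBA.symm.mul_right c4.symm).mul_right cAD) (c := s)
        (by linarith)
      obtain ⟨k, hk⟩ := Int.sq_of_isCoprime ((c3.symm.mul_right cCD.symm).mul_right cAD.symm)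
        (c := s) (by linarith)
      have sqmod : ∀ u v : ℤ, Odd u → (u = v ^ 2 ∨ u = -v ^ 2) → v ^ 2 % 8 = 1 := by
        intro u v hu h
        apply odd_sq
        rcases h with rfl | rfl
        · exact (Int.odd_pow' two_ne_zero).mp hu
        · exact (Int.odd_pow' two_ne_zero).mp (by simpa using hu.neg)
      have r8 := sqmod b r hbo (Or.inl hr)
      have n8 := sqmod _ n hCo (Or.inl hn)
      have m8 := sqmod _ m hAo hm
      have k8 := sqmod _ k (by simp [Int.odd_add', hbo, parity_simps]) hk
      have hA : a - b < 0 := by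
        rcases hm with h | h
        · omega
        · have : 0 ≤ m ^ 2 := by positivity
          omega
      have hD : 0 < 2 * a + b := by
        rcases hk with h | h
        · have : 0 ≤ k ^ 2 := by positivity
          omega
        · omega
      nlinarith [mul_pos (neg_pos.mpr hA) hD]
    · obtain ⟨C, hC⟩ : ∃ C, a + b = 2 * C := (hao.add_odd hbo).two_dvd
      obtain ⟨A, hA⟩ : ∃ A, a - b = 2 * A := (hao.sub_odd hbo).two_dvd
      have hs2 : Even s := by
        have : Even (s ^ 2) := by rw [← hN, hC]; simp [parity_simps]
        exact (Int.even_pow' two_ne_zero).mp this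
      obtain ⟨s', rfl⟩ := hs2.two_dvd
      rw [hC, hA] at hN
      rw [hC] at cBC cCD
      rw [hA] at cBA cAD
      have hN' : b * C * A * (2 * a + b) = s' ^ 2 := by nlinarith
      have c1 : IsCoprime b C := cBC.of_mul_right_right
      have c2 : IsCoprime b A := cBA.of_mul_right_right
      have c3 : IsCoprime b (2 * a + b) :=
        cop_n 2 (-1) 1 2 0 hc (cop_two hbo) (by ring) (by ring)
      have c4 : IsCoprime C A :=
        cop_n 1 1 1 1 (-1) hc isCoprime_one_left (by linarith) (by linarith)
      have c5 : IsCoprime C (2 * a + b) := cCD.of_mul_left_right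
      have c6 : IsCoprime A (2 * a + b) := cAD.of_mul_left_right
      obtain ⟨r, hr⟩ := sq_pos_of ((c1.mul_right c2).mul_right c3) (c := s')
        (by linarith) (by linarith)
      obtain ⟨n, hn⟩ := sq_pos_of ((c1.symm.mul_right c4).mul_right c5) (c := s')
        (by linarith) (by linarith)
      obtain ⟨m, hm⟩ := Int.sq_of_isCoprime ((c2.symm.mul_right c4.symm).mul_right c6) (c := s')
        (by linarith)
      obtain ⟨k, hk⟩ := Int.sq_of_isCoprime ((c3.symm.mul_right c5.symm).mul_right c6.symm)
        (c := s') (by linarith)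
      have hDo : Odd (2 * a + b) := by simp [Int.odd_add', hbo, parity_simps]
      have hko : Odd k := by
        rcases hk with h | h
        · rw [h] at hDo; exact (Int.odd_pow' two_ne_zero).mp hDo
        · rw [h] at hDo; exact (Int.odd_pow' two_ne_zero).mp (by simpa using hDo.neg)
      have hro : Odd r := by rw [hr] at hbo; exact (Int.odd_pow' two_ne_zero).mp hbo
      have k8 := odd_sq hko
      have r8 := odd_sq hro
      obtain ⟨a', ha'⟩ := hao
      have hk' : 2 * a + b = - k ^ 2 := by
        rcases hk with h | h
        · omega
        · exact h
      have hm' : A = - m ^ 2 := by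
        rcases hm with h | h
        · exfalso
          have h1 : 0 ≤ m ^ 2 := by positivity
          have h2 : 0 ≤ k ^ 2 := by positivity
          rw [hA, hk'] at hAD
          nlinarith [mul_nonneg h1 h2]
        · exact h
      have hpar : Odd m ∧ Even n := by
        rcases Int.even_or_odd m with h1 | h1 <;> rcases Int.even_or_odd n with h2 | h2
        · have := even_sq h1; have := even_sq h2; omega
        · have := even_sq h1; have := odd_sq h2; omega
        · exact ⟨h1, h2⟩
        · have := odd_sq h1; have := odd_sq h2; omega
      have hcm : IsCoprime m n := by
        rw [hn, hm'] at c4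
        have c7 : IsCoprime (m ^ 2) (n ^ 2) := by simpa using c4.symm.neg_left
        exact (IsCoprime.pow_iff (by norm_num) (by norm_num)).mp c7
      have n0 : n = 0 := S_fin (ε := -1) (Or.inr rfl) hcm hpar.1 hpar.2 (m := r) (n := k)
        (by linarith) (by linarith)
      rw [n0] at hn
      simp at hn
      omega

/-- case `d = -1` -/
lemma case_neg {a b s t : ℤ} (hc : IsCoprime a b) (hb : 0 < b)
    (hN : b * (a + b) * (a - b) * (2 * a + b) = - s ^ 2) (hs : s ≠ 0)
    (hq : 4 * a ^ 4 - 2 * a ^ 3 * b - 3 * a ^ 2 * b ^ 2 - 2 * a * b ^ 3 - b ^ 4 = - t ^ 2) :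
    a = 0 := by
  have hspos : 0 < s ^ 2 := by positivity
  have hCpos : 0 < a + b := by
    by_contra hle
    have hC : a + b < 0 := by
      rcases lt_or_eq_of_le (not_lt.mp hle) with h | h
      · exact h
      · rw [h] at hN; simp at hN; exact absurd hN hs
    obtain ⟨u, hu⟩ : ∃ u, u = -a - b := ⟨_, rfl⟩
    have hu0 : 0 < u := by linarith
    have ha : a = -(b + u) := by linarith
    have : 0 < 4 * a ^ 4 - 2 * a ^ 3 * b - 3 * a ^ 2 * b ^ 2 - 2 * a * b ^ 3 - b ^ 4 := by
      rw [ha]; ring_nf; positivity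
    linarith [sq_nonneg t]
  have hAD : (a - b) * (2 * a + b) < 0 := by
    have h2 : 0 < b * (a + b) := mul_pos hb hCpos
    by_contra hle
    nlinarith [mul_nonneg h2.le (not_lt.mp hle)]
  have hD : 0 < 2 * a + b := by
    by_contra h
    nlinarith [mul_nonneg (by linarith : 0 ≤ b - a) (by linarith : 0 ≤ -(2 * a + b))]
  have hA : 0 < b - a := by
    by_contra h
    nlinarith [mul_nonneg (by linarith : 0 ≤ a - b) hD.le]
  have cBC : IsCoprime b (a + b) := cop_n 1 (-1) 1 1 0 hc isCoprime_one_left (by ring) (by ring)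
  have cBA : IsCoprime b (b - a) := cop_n 1 1 (-1) 1 0 hc isCoprime_one_left (by ring) (by ring)
  have cCD : IsCoprime (a + b) (2 * a + b) :=
    cop_n 1 (-1) 1 2 (-1) hc isCoprime_one_left (by ring) (by ring)
  have prodsq : ∀ x y z w : ℤ, x = y ^ 2 → z = w ^ 2 → x ≠ 0 → z ≠ 0 → ∀ v S : ℤ,
      x * z * v = S ^ 2 → ∃ c, v = c ^ 2 := by
    intro x y z w hx hz hx0 hz0 v S h
    have hd : (y * w) ^ 2 ∣ S ^ 2 := ⟨v, by rw [← h, hx, hz]; ring⟩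
    obtain ⟨c, hc⟩ := (Int.pow_dvd_pow_iff two_ne_zero).mp hd
    refine ⟨c, ?_⟩
    have h0 : x * z ≠ 0 := mul_ne_zero hx0 hz0
    apply mul_left_cancel₀ h0
    rw [h, hc, hx, hz]; ring
  rcases Int.even_or_odd b with hbe | hbo
  · exfalso
    obtain ⟨c, rfl⟩ := hbe.two_dvd
    have hao : Odd a := by
      by_contra h
      rw [Int.not_odd_iff_even] at h
      exact cop_no hc Int.prime_two h.two_dvd ⟨c, rfl⟩
    have hs2 : Even s := by
      have : Even (s ^ 2) := by
        rw [← even_neg, ← hN]; simp [parity_simps]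
      exact (Int.even_pow' two_ne_zero).mp this
    obtain ⟨s', rfl⟩ := hs2.two_dvd
    have hN' : c * (a + 2 * c) * (2 * c - a) * (a + c) = s' ^ 2 := by nlinarith
    have ht2 : Even t := by
      have : Even (t ^ 2) := by
        rw [← even_neg, ← hq]
        exact ⟨2 * a ^ 4 - 2 * a ^ 3 * c - 6 * a ^ 2 * c ^ 2 - 8 * a * c ^ 3 - 8 * c ^ 4, by ring⟩
      exact (Int.even_pow' two_ne_zero).mp this
    obtain ⟨t', rfl⟩ := ht2.two_dvd
    have hq' : a ^ 4 - a ^ 3 * c - 3 * a ^ 2 * c ^ 2 - 4 * a * c ^ 3 - 4 * c ^ 4 = - t' ^ 2 := by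
      nlinarith
    have hCo : Odd (a + 2 * c) := by simp [Int.odd_add, hao, parity_simps]
    have c1 : IsCoprime c (a + 2 * c) := cBC.of_mul_left_right
    have c2 : IsCoprime c (2 * c - a) := cBA.of_mul_left_right
    have c3 : IsCoprime c (a + c) := cop_n 1 (-1) 1 2 0 hc isCoprime_one_left (by ring) (by ring)
    have c4 : IsCoprime (a + 2 * c) (2 * c - a) :=
      cop_n 2 1 (-1) 1 1 hc (cop_two hCo) (by ring) (by ring)
    have c5 : IsCoprime (a + 2 * c) (a + c) :=
      cop_n 1 (-1) 2 2 (-2) hc isCoprime_one_left (by ring) (by ring)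
    have hcpos : 0 < c := by linarith
    obtain ⟨r, hr⟩ := sq_pos_of ((c1.mul_right c2).mul_right c3) (c := s')
      (by linarith) hcpos
    obtain ⟨n, hn⟩ := sq_pos_of ((c1.symm.mul_right c4).mul_right c5) (c := s')
      (by linarith) (by linarith)
    obtain ⟨S, hS⟩ := prodsq c r (a + 2 * c) n hr hn hcpos.ne' hCpos.ne'
      ((2 * c - a) * (a + c)) s' (by linarith)
    have hEpos : 0 < a + c := by linarith
    have hr8 : c % 8 = 1 ∧ a % 8 = 7 := by
      rcases Int.even_or_odd r with h | h
      · exfalso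
        have h4 := even_sq h
        obtain ⟨d, hd⟩ : ∃ d, c = 4 * d := ⟨c / 4, by omega⟩
        have ha4 : a ^ 4 % 8 = 1 := by
          have := odd_sq (hao.pow (n := 2))
          rw [← pow_mul] at this; exact this
        have ht : t' ^ 2 % 4 = 0 ∨ t' ^ 2 % 4 = 1 := by
          rcases Int.even_or_odd t' with h | h
          · left; exact even_sq h
          · right; have := odd_sq h; omega
        have : a ^ 4 + t' ^ 2 = 4 * (a ^ 3 * d + 12 * a ^ 2 * d ^ 2 + 64 * a * d ^ 3
            + 256 * d ^ 4) := by
          rw [hd] at hq'; linarith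
        omega
      · have h8 := odd_sq h
        have hc8 : c % 8 = 1 := by omega
        refine ⟨hc8, ?_⟩
        have hto : t' ^ 2 % 8 = 1 := by
          apply odd_sq
          have hco : Odd c := by rw [hr]; exact h.pow
          have : Odd (t' ^ 2) := by
            rw [← odd_neg, ← hq']
            have e1 : a ^ 4 - a ^ 3 * c - 3 * a ^ 2 * c ^ 2 - 4 * a * c ^ 3 - 4 * c ^ 4
              = a ^ 3 * (a - c) - a ^ 2 * c ^ 2 + 2 * (-a ^ 2 * c ^ 2 - 2 * a * c ^ 3 - 2 * c ^ 4) := by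
              ring
            rw [e1]
            exact (((hao.sub_odd hco).mul_left _).sub_odd (hao.pow.mul hco.pow)).add_even
              (even_two_mul _)
          exact (Int.odd_pow' two_ne_zero).mp this
        have ha2 := odd_sq hao
        obtain ⟨u, hu⟩ : ∃ u, a ^ 2 = 8 * u + 1 := ⟨a ^ 2 / 8, by omega⟩
        obtain ⟨v, hv⟩ : ∃ v, c = 8 * v + 1 := ⟨c / 8, by omega⟩
        obtain ⟨w, hw⟩ : ∃ w, t' ^ 2 = 8 * w + 1 := ⟨t' ^ 2 / 8, by omega⟩
        have hz : (a : ZMod 8) = 7 := by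
          have q8 := congrArg (fun z : ℤ => (z : ZMod 8)) hq'
          have c8 : (c : ZMod 8) = 1 := by
            rw [hv]; push_cast
            rw [show (8 : ZMod 8) = 0 from rfl]; ring
          have t8 : (t' : ZMod 8) ^ 2 = 1 := by
            have : ((t' ^ 2 : ℤ) : ZMod 8) = 1 := by
              rw [hw]; push_cast
              rw [show (8 : ZMod 8) = 0 from rfl]; ring
            simpa using this
          have a8 : (a : ZMod 8) ^ 2 = 1 := by
            have : ((a ^ 2 : ℤ) : ZMod 8) = 1 := by
              rw [hu]; push_cast
              rw [show (8 : ZMod 8) = 0 from rfl]; ring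
            simpa using this
          push_cast at q8
          rw [c8, t8] at q8
          generalize (a : ZMod 8) = z at *
          clear * - q8 a8
          revert z
          decide
        have : ((a - 7 : ℤ) : ZMod 8) = 0 := by push_cast; rw [hz]; rfl
        have := (ZMod.intCast_zmod_eq_zero_iff_dvd (a - 7) 8).mp this
        omega
    have hro : Odd r := by
      have : Odd (r ^ 2) := by rw [← hr]; rw [Int.odd_iff]; omega
      exact (Int.odd_pow' two_ne_zero).mp this
    rcases sp3 (-1) 2 2 2 hc (by ring) (by ring) hA hEpos hS with
      ⟨m, k, hm, hk⟩ | ⟨m, k, hm, hk⟩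
    · have : Odd m := by
        have : Odd (m ^ 2) := by rw [← hm]; rw [Int.odd_iff]; omega
        exact (Int.odd_pow' two_ne_zero).mp this
      have := odd_sq this
      omega
    · have hke : Even k := by
        have : Even (k ^ 2) := by rw [Int.even_iff]; omega
        exact (Int.even_pow' two_ne_zero).mp this
      have hcr : IsCoprime r k := by
        have h1 : IsCoprime c (3 * k ^ 2) := by rw [← hk]; exact c3
        have h2 := h1.of_mul_right_right
        rw [hr] at h2
        exact (IsCoprime.pow_iff (by norm_num) (by norm_num)).mp h2
      have k0 : k = 0 := S_fin (ε := 1) (Or.inl rfl) hcr hro hke (m := m) (n := n)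
        (by linarith) (by linarith)
      rw [k0] at hk
      simp at hk
      omega
  · have hDo : Odd (2 * a + b) := by simp [Int.odd_add', hbo, parity_simps]
    have c3 : IsCoprime b (2 * a + b) :=
      cop_n 2 (-1) 1 2 0 hc (cop_two hbo) (by ring) (by ring)
    rcases Int.even_or_odd a with hae | hao
    · have hCo : Odd (a + b) := hae.add_odd hbo
      have hAo : Odd (b - a) := hbo.sub_even hae
      have c4 : IsCoprime (a + b) (b - a) :=
        cop_n 2 1 (-1) 1 1 hc (cop_two hCo) (by ring) (by ring)
      obtain ⟨r, hr⟩ := sq_pos_of ((cBC.mul_right cBA).mul_right c3) (c := s)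
        (by linarith) (by linarith)
      obtain ⟨n, hn⟩ := sq_pos_of ((cBC.symm.mul_right c4).mul_right cCD) (c := s)
        (by linarith) (by linarith)
      obtain ⟨S, hS⟩ := prodsq b r (a + b) n hr hn hb.ne' hCpos.ne'
        ((b - a) * (2 * a + b)) s (by linarith)
      have sqmod : ∀ u v : ℤ, Odd u → u = v ^ 2 → v ^ 2 % 8 = 1 := by
        intro u v hu h
        apply odd_sq
        rw [h] at hu
        exact (Int.odd_pow' two_ne_zero).mp hu
      have r8 := sqmod b r hbo hr
      have n8 := sqmod _ n hCo hn
      rcases sp3 (-1) 1 2 1 hc (by ring) (by ring) hA hD hS with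
        ⟨m, k, hm, hk⟩ | ⟨m, k, hm, hk⟩
      · exact ap_fin hc hbo (by omega) hr hn hm hk
      · exfalso
        have : Odd m := by
          have h1 := hAo
          rw [hm] at h1
          exact (Int.odd_pow' two_ne_zero).mp (Int.odd_mul.mp h1).2
        have := odd_sq this
        omega
    · exfalso
      obtain ⟨C, hC⟩ : ∃ C, a + b = 2 * C := (hao.add_odd hbo).two_dvd
      obtain ⟨A, hA'⟩ : ∃ A, b - a = 2 * A := (hbo.sub_odd hao).two_dvd
      have hN1 : b * (a + b) * (b - a) * (2 * a + b) = s ^ 2 := by linarith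
      have hs2 : Even s := by
        have : Even (s ^ 2) := by rw [← hN1, hC]; simp [parity_simps]
        exact (Int.even_pow' two_ne_zero).mp this
      obtain ⟨s', rfl⟩ := hs2.two_dvd
      rw [hC, hA'] at hN1
      rw [hC] at cBC cCD
      rw [hA'] at cBA
      have hN' : b * C * A * (2 * a + b) = s' ^ 2 := by nlinarith
      have c1 : IsCoprime b C := cBC.of_mul_right_right
      have c2 : IsCoprime b A := cBA.of_mul_right_right
      have c4 : IsCoprime C A :=
        cop_n 1 1 (-1) 1 1 hc isCoprime_one_left (by linarith) (by linarith)
      have c5 : IsCoprime C (2 * a + b) := cCD.of_mul_left_right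
      obtain ⟨r, hr⟩ := sq_pos_of ((c1.mul_right c2).mul_right c3) (c := s')
        (by linarith) (by linarith)
      obtain ⟨n, hn⟩ := sq_pos_of ((c1.symm.mul_right c4).mul_right c5) (c := s')
        (by linarith) (by linarith)
      obtain ⟨S, hS⟩ := prodsq b r C n hr hn hb.ne' (by omega)
        (A * (2 * a + b)) s' (by linarith)
      have hro : Odd r := by rw [hr] at hbo; exact (Int.odd_pow' two_ne_zero).mp hbo
      have r8 := odd_sq hro
      obtain ⟨a', ha'⟩ := hao
      rcases sp3 (-2) 1 4 1 hc (by linarith) (by linarith) (by linarith) hD hS with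
        ⟨m, k, hm, hk⟩ | ⟨m, k, hm, hk⟩
      · have : Odd k := by rw [hk] at hDo; exact (Int.odd_pow' two_ne_zero).mp hDo
        have := odd_sq this
        omega
      · have hko : Odd k := by
          rw [hk] at hDo
          exact (Int.odd_pow' two_ne_zero).mp (Int.odd_mul.mp hDo).2
        have k8 := odd_sq hko
        have hpar : Odd n ∧ Even m := by
          rcases Int.even_or_odd m with h1 | h1 <;> rcases Int.even_or_odd n with h2 | h2
          · have := even_sq h1; have := even_sq h2; omega
          · exact ⟨h2, h1⟩
          · have := odd_sq h1; have := even_sq h2; omega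
          · have := odd_sq h1; have := odd_sq h2; omega
        have hcm : IsCoprime n m := by
          rw [hn, hm] at c4
          exact (IsCoprime.pow_iff (by norm_num) (by norm_num)).mp c4.of_mul_right_right
        have m0 : m = 0 := S_fin (ε := 1) (Or.inl rfl) hcm hpar.1 hpar.2 (m := k) (n := r)
          (by linarith) (by linarith)
        rw [m0] at hm
        simp at hm
        omega

lemma q_odd {a b : ℤ} (hc : IsCoprime a b) : ∃ κ Q : ℤ, (κ = 1 ∨ κ = 2) ∧ Odd Q ∧
    4 * a ^ 4 - 2 * a ^ 3 * b - 3 * a ^ 2 * b ^ 2 - 2 * a * b ^ 3 - b ^ 4 = κ ^ 2 * Q := by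
  rcases Int.even_or_odd b with hbe | hbo
  · have hao : Odd a := by
      by_contra h
      rw [Int.not_odd_iff_even] at h
      exact cop_no hc Int.prime_two h.two_dvd hbe.two_dvd
    obtain ⟨c, rfl⟩ := hbe.two_dvd
    refine ⟨2, a ^ 4 - a ^ 3 * c - 3 * a ^ 2 * c ^ 2 - 4 * a * c ^ 3 - 4 * c ^ 4, Or.inr rfl, ?_,
      by ring⟩
    have e1 : a ^ 4 - a ^ 3 * c - 3 * a ^ 2 * c ^ 2 - 4 * a * c ^ 3 - 4 * c ^ 4
        = a ^ 4 - a ^ 2 * (c * (c + a))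
          + 2 * (-a ^ 2 * c ^ 2 - 2 * a * c ^ 3 - 2 * c ^ 4) := by
      ring
    rw [e1]
    refine (hao.pow.sub_even ?_).add_even (even_two_mul _)
    apply Even.mul_left
    rcases Int.even_or_odd c with h | h
    · exact h.mul_right _
    · exact (h.add_odd hao).mul_left _
  · rcases Int.even_or_odd a with hae | hao
    · refine ⟨1, _, Or.inl rfl, ?_, (by rw [one_pow, one_mul])⟩
      have e1 : 4 * a ^ 4 - 2 * a ^ 3 * b - 3 * a ^ 2 * b ^ 2 - 2 * a * b ^ 3 - b ^ 4
          = a * (4 * a ^ 3 - 2 * a ^ 2 * b - 3 * a * b ^ 2 - 2 * b ^ 3) - b ^ 4 := by ring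
      rw [e1]
      exact (hae.mul_right _).sub_odd hbo.pow
    · have ha2 := odd_sq hao
      have hb2 := odd_sq hbo
      obtain ⟨u, hu⟩ : ∃ u, a ^ 2 = 8 * u + 1 := ⟨a ^ 2 / 8, by omega⟩
      obtain ⟨v, hv⟩ : ∃ v, b ^ 2 = 8 * v + 1 := ⟨b ^ 2 / 8, by omega⟩
      refine ⟨2, (8 * u + 1) ^ 2 - a * b * (4 * (u + v) + 1) - (8 * v + 1) * (6 * u + 2 * v + 1),
        Or.inr rfl, ?_, ?_⟩
      · have o1 : Odd (8 * u + 1) := ⟨4 * u, by ring⟩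
        have o2 : Odd (4 * (u + v) + 1) := ⟨2 * (u + v), by ring⟩
        have o3 : Odd (8 * v + 1) := ⟨4 * v, by ring⟩
        have o4 : Odd (6 * u + 2 * v + 1) := ⟨3 * u + v, by ring⟩
        exact (o1.pow.sub_odd ((hao.mul hbo).mul o2)).sub_odd (o3.mul o4)
      · have e1 : 4 * a ^ 4 - 2 * a ^ 3 * b - 3 * a ^ 2 * b ^ 2 - 2 * a * b ^ 3 - b ^ 4
          = 4 * (a ^ 2) ^ 2 - 2 * (a * b) * (a ^ 2 + b ^ 2) - 3 * a ^ 2 * b ^ 2 - (b ^ 2) ^ 2 := by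
          ring
        rw [e1, hu, hv]; ring

lemma main_int {a b Y : ℤ} (hb : 0 < b) (hc : IsCoprime a b)
    (h : b * (a + b) * (a - b) * (2 * a + b) *
      (4 * a ^ 4 - 2 * a ^ 3 * b - 3 * a ^ 2 * b ^ 2 - 2 * a * b ^ 3 - b ^ 4) = Y ^ 2) :
    a = 0 ∨ a = b ∨ a = -b ∨ 2 * a = -b := by
  by_contra hne
  push Not at hne
  obtain ⟨n1, n2, n3, n4⟩ := hne
  have hN0 : b * (a + b) * (a - b) * (2 * a + b) ≠ 0 := by
    refine mul_ne_zero (mul_ne_zero (mul_ne_zero hb.ne' ?_) ?_) ?_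
    · intro h; apply n3; linarith
    · intro h; apply n2; linarith
    · intro h; apply n4; linarith
  obtain ⟨κ, Q, hκ, hQ, e⟩ := q_odd hc
  have hκ0 : κ ≠ 0 := by rcases hκ with rfl | rfl <;> norm_num
  have hcop : IsCoprime (b * (a + b) * (a - b) * (2 * a + b)) Q := by
    apply cop_of
    intro p hp h1 h2
    have hp2 : ¬ p ∣ 2 ^ 2 := by
      intro h
      have h := hp.dvd_of_dvd_pow h
      have has : Associated p 2 := hp.associated_of_dvd Int.prime_two h
      have : (2 : ℤ) ∣ Q := has.dvd_iff_dvd_left.mp h2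
      obtain ⟨k, hk⟩ := hQ
      omega
    have hq : p ∣ 4 * a ^ 4 - 2 * a ^ 3 * b - 3 * a ^ 2 * b ^ 2 - 2 * a * b ^ 3 - b ^ 4 := by
      rw [e]; exact h2.mul_left _
    have fin : ∀ x : ℤ, p ∣ 2 ^ 2 * x ^ 4 → p ∣ x := fun x h =>
      hp.dvd_of_dvd_pow ((hp.dvd_or_dvd h).resolve_left hp2)
    rcases hp.dvd_or_dvd h1 with h1 | h1
    · rcases hp.dvd_or_dvd h1 with h1 | h1
      · rcases hp.dvd_or_dvd h1 with h1 | h1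
        · refine cop_no hc hp (fin a ?_) h1
          have := dvd_add hq (h1.mul_right (2 * a ^ 3 + 3 * a ^ 2 * b + 2 * a * b ^ 2 + b ^ 3))
          ring_nf at this ⊢
          exact this
        · have hpb : p ∣ b := by
            apply fin b
            have := dvd_sub hq (h1.mul_right (4 * a ^ 3 - 6 * a ^ 2 * b + 3 * a * b ^ 2 - 5 * b ^ 3))
            ring_nf at this ⊢
            exact this
          refine cop_no hc hp ?_ hpb
          have := dvd_sub h1 hpb
          simpa using this
      · have hpb : p ∣ b := by
          apply fin b
          have := dvd_sub (h1.mul_right (4 * a ^ 3 + 2 * a ^ 2 * b - a * b ^ 2 - 3 * b ^ 3)) hq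
          ring_nf at this ⊢
          exact this
        refine cop_no hc hp ?_ hpb
        have := dvd_add h1 hpb
        simpa using this
    · have hpa : p ∣ a := by
        apply fin a
        have := dvd_sub (h1.mul_right (4 * a ^ 3 - 3 * a ^ 2 * b - b ^ 3)) hq
        ring_nf at this ⊢
        exact this
      refine cop_no hc hp hpa ?_
      have := dvd_sub h1 (hpa.mul_left 2)
      simpa using this
  rw [e] at h
  have hd : κ ^ 2 ∣ Y ^ 2 := ⟨_, by rw [← h, mul_left_comm]⟩
  obtain ⟨y, rfl⟩ := (Int.pow_dvd_pow_iff two_ne_zero).mp hd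
  have h' : b * (a + b) * (a - b) * (2 * a + b) * Q = y ^ 2 := by
    have : κ ^ 2 ≠ 0 := pow_ne_zero _ hκ0
    apply mul_left_cancel₀ this
    linarith
  have hQ0 : Q ≠ 0 := by rintro rfl; simp at hQ
  obtain ⟨s, hs⟩ := Int.sq_of_isCoprime hcop h'
  obtain ⟨t, ht⟩ := Int.sq_of_isCoprime hcop.symm (by rw [mul_comm]; exact h')
  have hs0 : s ≠ 0 := by rintro rfl; simp at hs; simp at hN0; tauto
  have ht0 : t ≠ 0 := by rintro rfl; simp at ht; exact hQ0 ht
  have hst : 0 < s ^ 2 * t ^ 2 := by positivity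
  rcases hs with hs | hs <;> rcases ht with ht | ht
  · exact case_pos hc hb hs hs0 (t := κ * t) (by rw [e, ht]; ring)
  · rw [hs, ht] at h'; nlinarith [sq_nonneg y]
  · rw [hs, ht] at h'; nlinarith [sq_nonneg y]
  · exact n1 (case_neg hc hb hs hs0 (t := κ * t) (by rw [e, ht]; ring))

/-- Subsection 6.1: the affine rational points of
`y² = 8x⁷ - 16x⁵ - 7x⁴ + 4x³ + 6x² + 4x + 1` are exactly
`(0, 1), (0, -1), (-1, 0), (-1/2, 0), (1, 0)`. -/
theorem stmt_10 :
    ∀ x y : ℚ,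
      y ^ 2 = 8 * x ^ 7 - 16 * x ^ 5 - 7 * x ^ 4 + 4 * x ^ 3 + 6 * x ^ 2
          + 4 * x + 1 ↔
        (x = 0 ∧ y = 1) ∨ (x = 0 ∧ y = -1) ∨ (x = -1 ∧ y = 0) ∨
        (x = -1/2 ∧ y = 0) ∨ (x = 1 ∧ y = 0) := by
  intro x y
  constructor
  · intro h
    have hx : x = 0 ∨ x = 1 ∨ x = -1 ∨ x = -1/2 := by
      obtain ⟨a, ha⟩ : ∃ a, a = x.num := ⟨_, rfl⟩
      obtain ⟨b, hbd⟩ : ∃ b : ℤ, b = x.den := ⟨_, rfl⟩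
      have hb : 0 < b := by rw [hbd]; exact_mod_cast x.den_pos
      have hc : IsCoprime a b := by
        rw [ha, hbd, Int.isCoprime_iff_nat_coprime]
        simpa using x.reduced
      have hbq : (b : ℚ) ≠ 0 := by exact_mod_cast hb.ne'
      have hxab : x = a / b := by
        rw [ha, hbd]; exact_mod_cast (Rat.num_div_den x).symm
      have hY : (((b * (a + b) * (a - b) * (2 * a + b) *
          (4 * a ^ 4 - 2 * a ^ 3 * b - 3 * a ^ 2 * b ^ 2 - 2 * a * b ^ 3 - b ^ 4) : ℤ)) : ℚ)
          = (b ^ 4 * y) ^ 2 := by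
        rw [mul_pow, h, hxab]
        push_cast
        field_simp
        ring
      have hsq : IsSquare (((b * (a + b) * (a - b) * (2 * a + b) *
          (4 * a ^ 4 - 2 * a ^ 3 * b - 3 * a ^ 2 * b ^ 2 - 2 * a * b ^ 3 - b ^ 4) : ℤ)) : ℚ) :=
        ⟨b ^ 4 * y, by rw [hY, sq]⟩
      rw [Rat.isSquare_intCast_iff] at hsq
      obtain ⟨Y, hY'⟩ := hsq
      rcases main_int hb hc (Y := Y) (by rw [hY', sq]) with h | h | h | h
      · left; rw [hxab, h]; simp
      · right; left; rw [hxab, h]; field_simp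
      · right; right; left; rw [hxab, h]; push_cast; field_simp
      · right; right; right; rw [hxab]
        have : (2 : ℚ) * a = -b := by exact_mod_cast h
        field_simp; linarith
    rcases hx with rfl | rfl | rfl | rfl
    · have : (y - 1) * (y + 1) = 0 := by linear_combination h
      rcases mul_eq_zero.mp this with h | h
      · left; exact ⟨rfl, by linarith⟩
      · right; left; exact ⟨rfl, by linarith⟩
    · norm_num at h; simp [h]
    · norm_num at h; simp [h]
    · norm_num at h; simp [h]
  · rintro (⟨rfl, rfl⟩ | ⟨rfl, rfl⟩ | ⟨rfl, rfl⟩ | ⟨rfl, rfl⟩ | ⟨rfl, rfl⟩) <;> norm_num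
end

section
/- The set of affine rational points of the hyperelliptic curve C : y² = x⁸ + 4x⁷ + 6x⁶ + 4x⁵ − 7x⁴ − 16x³ + 8x is exactly {(−2, 0), (−1, 0), (0, 0), (1, 0)}: for x, y ∈ ℚ, y² = x⁸ + 4x⁷ + 6x⁶ + 4x⁵ − 7x⁴ − 16x³ + 8x holds if and only if (x, y) is one of these four pairs. -/
lemma aux_pow4 {A B e : ℤ} (hc : IsCoprime A B) (hA : 0 < A) (h : A * B = e ^ 4) :
    ∃ a, A = a ^ 4 := by
  obtain ⟨d, hd⟩ := exists_associated_pow_of_mul_eq_pow' hc h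
  rcases Int.associated_iff.mp hd with h1 | h1
  · exact ⟨d, h1.symm⟩
  · exfalso
    have : 0 ≤ d ^ 4 := by positivity
    linarith

lemma aux_sq {A B e : ℤ} (hc : IsCoprime A B) (hA : 0 < A) (h : A * B = e ^ 2) :
    ∃ a, A = a ^ 2 := by
  obtain ⟨d, h1 | h1⟩ := Int.sq_of_isCoprime hc h
  · exact ⟨d, h1⟩
  · exfalso
    have : 0 ≤ d ^ 2 := by positivity
    linarith

lemma aux_split {A B e : ℤ} (hc : IsCoprime A B) (hA : 0 < A) (hB : 0 < B)
    (h : A * B = 5 * e ^ 4) :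
    ∃ a b : ℤ, A + B = a ^ 4 + 5 * b ^ 4 ∧ (a * b) ^ 2 = e ^ 2 ∧ IsCoprime a b := by
  have key : ∀ A B : ℤ, IsCoprime A B → 0 < A → 0 < B → A * B = 5 * e ^ 4 → (5 : ℤ) ∣ A →
      ∃ a b : ℤ, A + B = a ^ 4 + 5 * b ^ 4 ∧ (a * b) ^ 2 = e ^ 2 ∧ IsCoprime a b := by
    intro A B hc hA hB h h5
    obtain ⟨A', rfl⟩ := h5
    have h' : A' * B = e ^ 4 := by linarith
    have hc' : IsCoprime A' B := hc.of_mul_left_right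
    obtain ⟨b, hb⟩ := aux_pow4 hc' (by linarith) h'
    obtain ⟨a, ha⟩ := aux_pow4 (e := e) hc'.symm hB (by linarith)
    subst hb ha
    refine ⟨a, b, by ring, ?_, ?_⟩
    · have : ((a * b) ^ 2) ^ 2 = (e ^ 2) ^ 2 := by linarith
      exact (pow_left_inj₀ (by positivity) (by positivity) two_ne_zero).mp this
    · exact (IsCoprime.pow_iff (by norm_num) (by norm_num)).mp hc'.symm
  have hp : Prime (5 : ℤ) := by norm_num
  rcases hp.dvd_or_dvd (show (5 : ℤ) ∣ A * B from ⟨_, h⟩) with h5 | h5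
  · exact key A B hc hA hB h h5
  · have := key B A hc.symm hB hA (by linarith) h5
    rwa [add_comm B A] at this

lemma aux_coprime {A B r e : ℤ} (hc : IsCoprime r e) (h : A * B = 5 * e ^ 4)
    (hs : ∀ p : ℤ, Prime p → p ∣ A → p ∣ B → p ∣ e → p ∣ r) (hA : 0 < A) : IsCoprime A B := by
  apply isCoprime_of_prime_dvd
  · rintro ⟨h0, _⟩; omega
  · intro p hp h1 h2
    have he : p ∣ e := by
      by_cases h5 : p ∣ 5
      · have hass : Associated p 5 := hp.associated_of_dvd (by norm_num) h5
        have h3 : (5 : ℤ) ∣ A := hass.symm.dvd.trans h1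
        have h4 : (5 : ℤ) ∣ B := hass.symm.dvd.trans h2
        obtain ⟨k, rfl⟩ := h3
        obtain ⟨l, rfl⟩ := h4
        have : (5 : ℤ) ∣ e ^ 4 := ⟨k * l, by linarith⟩
        exact hp.dvd_of_dvd_pow (h5.trans this)
      · have : p ∣ 5 * e ^ 4 := h ▸ Dvd.dvd.mul_right h1 B
        rcases hp.dvd_or_dvd this with h | h
        · exact absurd h h5
        · exact hp.dvd_of_dvd_pow h
    exact hp.not_isUnit (hc.isUnit_of_dvd' (hs p hp h1 h2 he) he)

lemma one_of_sq_mul {a u : ℤ} (ha : 0 < a) (hu : 0 < u) (h : a * u ≤ 1) : a = 1 ∧ u = 1 := by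
  constructor <;> nlinarith

set_option maxHeartbeats 2000000 in
lemma quartic (n : ℕ) : ∀ r e s : ℤ, e.natAbs = n → IsCoprime r e →
    s ^ 2 = r ^ 4 + r ^ 2 * e ^ 2 - e ^ 4 → e = 0 ∨ (e ^ 2 = 1 ∧ r ^ 2 = 1) := by
  induction n using Nat.strong_induction_on with
  | _ n ih =>
  intro r e s hn hc h
  by_cases he0 : e = 0
  · exact Or.inl he0
  right
  have IH : ∀ u v a : ℤ, v ^ 2 < e ^ 2 → IsCoprime u v →
      a ^ 2 = u ^ 4 + u ^ 2 * v ^ 2 - v ^ 4 → v = 0 ∨ (v ^ 2 = 1 ∧ u ^ 2 = 1) := by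
    intro u v a hv hc h
    exact ih v.natAbs (by rw [← hn]; exact Int.natAbs_lt_iff_sq_lt.mpr hv) u v a rfl hc h
  have he2 : 0 < e ^ 2 := by positivity
  have hr0 : r ≠ 0 := by
    rintro rfl
    nlinarith [sq_nonneg s, pow_pos he2 2]
  have hr2 : 0 < r ^ 2 := by positivity
  rcases Int.even_or_odd e with hev | hodd
  · -- even case
    obtain ⟨k, hk⟩ := hev
    have hk : e = 2 * k := by omega
    have hro : Odd r := by
      by_contra hcon
      have h1 : (2 : ℤ) ∣ r := (Int.not_odd_iff_even.mp hcon).two_dvd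
      have := hc.isUnit_of_dvd' h1 ⟨k, hk⟩
      exact absurd this (by norm_num [Int.isUnit_iff])
    have hk0 : k ≠ 0 := by rintro rfl; omega
    have hk2 : 0 < k ^ 2 := by positivity
    have hso : Odd s := by
      by_contra hcon
      have h1 : Even s := Int.not_odd_iff_even.mp hcon
      have h2 : Even (s ^ 2 - r ^ 2 * e ^ 2 + e ^ 4) := by
        have : Even e := ⟨k, by omega⟩
        simp [parity_simps, h1, this]
      have h3 : Odd (r ^ 4) := hro.pow
      rw [show s ^ 2 - r ^ 2 * e ^ 2 + e ^ 4 = r ^ 4 by linarith] at h2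
      exact (Int.not_even_iff_odd.mpr h3) h2
    have hrs : Odd (r ^ 2) := hro.pow
    obtain ⟨r1, hr1⟩ := hrs
    obtain ⟨s1, hs1⟩ := hso
    obtain ⟨A, hA⟩ : ∃ A, A = r1 - s1 + k ^ 2 := ⟨_, rfl⟩
    obtain ⟨B, hB⟩ : ∃ B, B = r1 + s1 + 1 + k ^ 2 := ⟨_, rfl⟩
    have hsum : A + B = r ^ 2 + 2 * k ^ 2 := by rw [hA, hB, hr1]; ring
    have hdif : B - A = s := by rw [hA, hB, hs1]; ring
    have hprod : A * B = 5 * k ^ 4 := by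
      have : 4 * (A * B) = (A + B) ^ 2 - (B - A) ^ 2 := by ring
      rw [hsum, hdif, h, hk] at this
      linarith
    have hABp : 0 < A * B := by rw [hprod]; positivity
    have hsp : 0 < A + B := by rw [hsum]; positivity
    have hAp : 0 < A := by
      by_contra hcon
      nlinarith
    have hBp : 0 < B := pos_of_mul_pos_right hABp hAp.le
    have hck : IsCoprime r k := by rw [hk] at hc; exact hc.of_mul_right_right
    have hcAB : IsCoprime A B := by
      apply aux_coprime hck hprod _ hAp
      intro p hp h1 h2 h3
      have : p ∣ r ^ 2 := by
        rw [show r ^ 2 = A + B - 2 * k * k by linarith]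
        exact dvd_sub (dvd_add h1 h2) (Dvd.dvd.mul_left h3 _)
      exact hp.dvd_of_dvd_pow this
    obtain ⟨a, b, hab, habk, hcab⟩ := aux_split hcAB hAp hBp hprod
    have hab0 : a * b ≠ 0 := by
      intro h0; rw [h0] at habk; nlinarith
    have ha0 : a ≠ 0 := left_ne_zero_of_mul hab0
    have hb0 : b ≠ 0 := right_ne_zero_of_mul hab0
    have hrab : r ^ 2 = (a ^ 2 - b ^ 2) ^ 2 + (2 * b ^ 2) ^ 2 := by
      have : r ^ 2 = a ^ 4 + 5 * b ^ 4 - 2 * k ^ 2 := by linarith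
      rw [this, ← habk]; ring
    have hodd : Odd (a ^ 2 - b ^ 2) := by
      by_contra hcon
      have h1 := Int.not_odd_iff_even.mp hcon
      have h2 : Even (r ^ 2) := by
        rw [hrab]; simp [parity_simps, Int.not_odd_iff_even] at h1 ⊢
        tauto
      exact (Int.not_even_iff_odd.mpr hro.pow) h2
    have hT : PythagoreanTriple (a ^ 2 - b ^ 2) (2 * b ^ 2) |r| := by
      unfold PythagoreanTriple
      rw [abs_mul_abs_self]; linarith
    have hg : IsCoprime (a ^ 2 - b ^ 2) (2 * b ^ 2) := by
      apply IsCoprime.mul_right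
      · exact Int.isCoprime_two_right.mpr hodd
      · have : IsCoprime (a ^ 2) (b ^ 2) := hcab.pow
        have := this.add_mul_right_left (-1)
        rwa [show a ^ 2 + -1 * b ^ 2 = a ^ 2 - b ^ 2 by ring] at this
    obtain ⟨p, q, h1, h2, h3, h4, h5, h6⟩ := hT.coprime_classification'
      (Int.isCoprime_iff_gcd_eq_one.mp hg) (Int.odd_iff.mp hodd) (abs_pos.mpr hr0)
    have hcpq : IsCoprime p q := Int.isCoprime_iff_gcd_eq_one.mpr h4
    have hpq : p * q = b ^ 2 := by linarith
    have hb2 : 0 < b ^ 2 := by positivity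
    have hpp : 0 < p := by
      rcases h6.lt_or_eq with h | h
      · exact h
      · rw [← h] at hpq; nlinarith
    have hqp : 0 < q := pos_of_mul_pos_right (hpq ▸ hb2) hpp.le
    obtain ⟨u, hu⟩ := aux_sq hcpq hpp hpq
    obtain ⟨v, hv⟩ := aux_sq hcpq.symm hqp (by rw [mul_comm]; exact hpq)
    subst hu hv
    have hcuv : IsCoprime u v := (IsCoprime.pow_iff (by norm_num) (by norm_num)).mp hcpq
    have ha2 : 0 < a ^ 2 := by positivity
    have hlt : v ^ 2 < e ^ 2 := by
      have : e ^ 2 = 4 * (a ^ 2 * u ^ 2) * v ^ 2 := by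
        rw [hk]
        have : k ^ 2 = a ^ 2 * (u ^ 2 * v ^ 2) := by rw [← habk, mul_pow, hpq]
        linarith
      have h1 : 0 < a ^ 2 * u ^ 2 := by positivity
      rw [this]
      nlinarith
    rcases IH u v a hlt hcuv (by linarith) with h | ⟨h7, h8⟩
    · subst h; simp at hqp
    · rw [h7, h8] at h5; omega
  · -- odd case
    obtain ⟨A, hA⟩ : ∃ A, A = 2 * r ^ 2 + e ^ 2 - 2 * s := ⟨_, rfl⟩
    obtain ⟨B, hB⟩ : ∃ B, B = 2 * r ^ 2 + e ^ 2 + 2 * s := ⟨_, rfl⟩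
    have hsum : A + B = 4 * r ^ 2 + 2 * e ^ 2 := by rw [hA, hB]; ring
    have hprod : A * B = 5 * e ^ 4 := by
      rw [hA, hB]; linear_combination (-4) * h
    have hABp : 0 < A * B := by rw [hprod]; positivity
    have hsp : 0 < A + B := by rw [hsum]; positivity
    have hAp : 0 < A := by
      by_contra hcon
      nlinarith
    have hBp : 0 < B := pos_of_mul_pos_right hABp hAp.le
    have hcAB : IsCoprime A B := by
      apply aux_coprime hc hprod _ hAp
      intro p hp h1 h2 h3
      have h4 : p ∣ 2 ^ 2 * r ^ 2 := by
        rw [show 2 ^ 2 * r ^ 2 = A + B - 2 * e * e by linarith]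
        exact dvd_sub (dvd_add h1 h2) (Dvd.dvd.mul_left h3 _)
      rcases hp.dvd_or_dvd h4 with h | h
      · exfalso
        have h2 : IsCoprime (2 : ℤ) e := Int.isCoprime_two_left.mpr hodd
        exact hp.not_isUnit (h2.isUnit_of_dvd' (hp.dvd_of_dvd_pow h) h3)
      · exact hp.dvd_of_dvd_pow h
    obtain ⟨a, b, hab, habk, hcab⟩ := aux_split hcAB hAp hBp hprod
    have hab0 : a * b ≠ 0 := by
      intro h0; rw [h0] at habk; nlinarith
    have ha0 : a ≠ 0 := left_ne_zero_of_mul hab0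
    have hb0 : b ≠ 0 := right_ne_zero_of_mul hab0
    have hoab : Odd (a * b) := by
      have : Odd ((a * b) ^ 2) := by rw [habk]; exact hodd.pow
      exact (Int.odd_pow' two_ne_zero).mp this
    obtain ⟨hoa, hob⟩ := Int.odd_mul.mp hoab
    have hev : Even (a ^ 2 - b ^ 2) := (hoa.pow).sub_odd hob.pow
    obtain ⟨c, hcc⟩ := hev
    have hrab : r ^ 2 = (b ^ 2) ^ 2 + c ^ 2 := by
      have h1 : 4 * r ^ 2 = a ^ 4 + 5 * b ^ 4 - 2 * e ^ 2 := by linarith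
      rw [← habk] at h1
      have h2 : 4 * r ^ 2 = (a ^ 2 - b ^ 2) ^ 2 + 4 * b ^ 4 := by rw [h1]; ring
      rw [hcc] at h2
      linarith
    have hT : PythagoreanTriple (b ^ 2) c |r| := by
      unfold PythagoreanTriple
      rw [abs_mul_abs_self]; linarith
    have hg : IsCoprime (b ^ 2) c := by
      have h1 : IsCoprime (b ^ 2) (a ^ 2) := hcab.symm.pow
      have h2 := h1.add_mul_left_right (-1)
      rw [show a ^ 2 + b ^ 2 * -1 = 2 * c by linarith] at h2
      exact h2.of_mul_right_right
    obtain ⟨p, q, h1, h2, h3, h4, h5, h6⟩ := hT.coprime_classification'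
      (Int.isCoprime_iff_gcd_eq_one.mp hg) (Int.odd_iff.mp hob.pow) (abs_pos.mpr hr0)
    have hcpq : IsCoprime p q := Int.isCoprime_iff_gcd_eq_one.mpr h4
    have hb2 : 0 < b ^ 2 := by positivity
    have hpq : (p + q) * (p - q) = b ^ 2 := by linarith
    have hcp : IsCoprime (p + q) (p - q) := by
      have ho : Odd (p + q) := by rw [Int.odd_iff]; omega
      have e1 : IsCoprime (p + q) (2 * p) := by
        apply IsCoprime.mul_right
        · exact Int.isCoprime_two_right.mpr ho
        · have := hcpq.symm.add_mul_left_left 1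
          rwa [show q + p * 1 = p + q by ring] at this
      have := e1.add_mul_left_right (-1)
      rwa [show 2 * p + (p + q) * -1 = p - q by ring] at this
    have hpp : 0 < p + q := by
      by_contra hcon
      nlinarith
    have hqp : 0 < p - q := pos_of_mul_pos_right (hpq ▸ hb2) hpp.le
    obtain ⟨u, hu⟩ := aux_sq hcp hpp hpq
    obtain ⟨v, hv⟩ := aux_sq hcp.symm hqp (by rw [mul_comm]; exact hpq)
    have hcuv : IsCoprime u v := by
      rw [hu, hv] at hcp
      exact (IsCoprime.pow_iff (by norm_num) (by norm_num)).mp hcp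
    have hb' : b ^ 2 = u ^ 2 * v ^ 2 := by rw [← hpq, hu, hv]
    have ha' : a ^ 2 = u ^ 4 + u ^ 2 * v ^ 2 - v ^ 4 := by
      have : a ^ 2 = b ^ 2 + ((p + q) ^ 2 - (p - q) ^ 2) := by
        rw [show (p + q) ^ 2 - (p - q) ^ 2 = 2 * (2 * p * q) by ring, ← h2]; linarith
      rw [this, hu, hv, hb']; ring
    have ha2 : 0 < a ^ 2 := by positivity
    have hu2 : 0 < u ^ 2 := hu ▸ hpp
    have hv2 : 0 < v ^ 2 := hv ▸ hqp
    have hee : e ^ 2 = (a ^ 2 * u ^ 2) * v ^ 2 := by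
      rw [← habk, mul_pow, hb']; ring
    have huv : v ^ 2 = 1 ∧ u ^ 2 = 1 := by
      by_cases hlt : v ^ 2 < e ^ 2
      · rcases IH u v a hlt hcuv ha' with h | h
        · subst h; simp at hv2
        · exact h
      · have : a ^ 2 * u ^ 2 ≤ 1 := by
          by_contra hcon
          apply hlt
          rw [hee]; nlinarith
        obtain ⟨h7, h8⟩ := one_of_sq_mul ha2 hu2 this
        refine ⟨?_, h8⟩
        have : u ^ 4 = 1 := by rw [show u ^ 4 = (u ^ 2) ^ 2 by ring, h8]; norm_num
        rw [h7, this, h8] at ha'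
        have h9 : v ^ 2 * (v ^ 2 - 1) = 0 := by linarith
        rcases mul_eq_zero.mp h9 with h | h <;> linarith
    obtain ⟨hv1, hu1⟩ := huv
    have ha1 : a ^ 2 = 1 := by
      rw [ha', show u ^ 4 = (u ^ 2) ^ 2 by ring, show v ^ 4 = (v ^ 2) ^ 2 by ring, hu1, hv1]
      norm_num
    refine ⟨by rw [hee, ha1, hu1, hv1]; norm_num, ?_⟩
    have hb1 : b ^ 2 = 1 := by rw [hb', hu1, hv1]; norm_num
    have hc0 : c = 0 := by rw [ha1, hb1] at hcc; omega
    rw [hrab, hb1, hc0]; norm_num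

lemma ec (z w : ℚ) (h : w ^ 2 = z * (z ^ 2 + z - 1)) : z = 0 ∨ z = 1 ∨ z = -1 := by
  by_cases hz : z = 0
  · exact Or.inl hz
  right
  obtain ⟨m, hm⟩ : ∃ m, m = z.num := ⟨_, rfl⟩
  obtain ⟨d, hd⟩ : ∃ d : ℤ, d = z.den := ⟨_, rfl⟩
  have hdp : 0 < d := by rw [hd]; exact_mod_cast z.den_pos
  have hm0 : m ≠ 0 := by rw [hm]; exact Rat.num_ne_zero.mpr hz
  have hzmd : z = m / d := by rw [hm, hd]; exact (Rat.num_div_den z).symm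
  have hcop : IsCoprime m d := by
    rw [hm, hd]; exact Int.isCoprime_iff_nat_coprime.mpr (by simpa using z.reduced)
  have hdq : (d : ℚ) ≠ 0 := by exact_mod_cast hdp.ne'
  have hW : (w * d ^ 2) ^ 2 = ((d * (m * (m ^ 2 + m * d - d ^ 2)) : ℤ) : ℚ) := by
    rw [mul_pow, h, hzmd]; push_cast; field_simp
  obtain ⟨N, hN⟩ : ∃ N : ℤ, d * (m * (m ^ 2 + m * d - d ^ 2)) = N ^ 2 := by
    have : IsSquare ((d * (m * (m ^ 2 + m * d - d ^ 2)) : ℤ) : ℚ) := ⟨w * d ^ 2, by rw [← hW]; ring⟩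
    obtain ⟨N, hN⟩ := Rat.isSquare_intCast_iff.mp this
    exact ⟨N, by rw [hN]; ring⟩
  have hcQd : IsCoprime d (m ^ 2 + m * d - d ^ 2) := by
    have := (hcop.symm.pow_right (n := 2)).add_mul_left_right (m - d)
    rwa [show m ^ 2 + d * (m - d) = m ^ 2 + m * d - d ^ 2 by ring] at this
  have hcQm : IsCoprime m (m ^ 2 + m * d - d ^ 2) := by
    have := ((hcop.pow_right (n := 2)).neg_right).add_mul_left_right (m + d)
    rwa [show -d ^ 2 + m * (m + d) = m ^ 2 + m * d - d ^ 2 by ring] at this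
  obtain ⟨e, rfl⟩ := aux_sq (hcop.symm.mul_right hcQd) hdp hN
  have he0 : e ≠ 0 := by rintro rfl; simp at hdp
  obtain ⟨M, hM⟩ : ∃ M, m * (m ^ 2 + m * e ^ 2 - (e ^ 2) ^ 2) = M ^ 2 := by
    have : e ^ 2 ∣ N ^ 2 := ⟨_, hN.symm⟩
    obtain ⟨M, rfl⟩ := (Int.pow_dvd_pow_iff two_ne_zero).mp this
    exact ⟨M, mul_left_cancel₀ hdp.ne' (by rw [hN]; ring)⟩
  have hcme : IsCoprime m e := (IsCoprime.pow_right_iff (by norm_num)).mp hcop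
  have fin : m ^ 2 = 1 → e ^ 2 = 1 → z = 1 ∨ z = -1 := by
    intro h1 h2
    rw [hzmd, h2]
    rcases sq_eq_sq_iff_eq_or_eq_neg.mp (show m ^ 2 = 1 ^ 2 by rw [h1]; norm_num) with h | h
    all_goals rw [h]; norm_num
  have root : ∀ r Q : ℤ, r ≠ 0 → r ^ 2 * Q = M ^ 2 → ∃ s, s ^ 2 = Q := by
    intro r Q hr hQ
    have : r ^ 2 ∣ M ^ 2 := ⟨_, hQ.symm⟩
    obtain ⟨s, rfl⟩ := (Int.pow_dvd_pow_iff two_ne_zero).mp this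
    exact ⟨s, (mul_left_cancel₀ (pow_ne_zero 2 hr) (by rw [hQ]; ring)).symm⟩
  rcases lt_or_gt_of_ne hm0 with hneg | hpos
  · obtain ⟨r, hr⟩ := aux_sq (A := -m) (hcQm.neg_left.neg_right) (by linarith)
      (show -m * -(m ^ 2 + m * e ^ 2 - (e ^ 2) ^ 2) = M ^ 2 by rw [neg_mul_neg, hM])
    have hr0 : r ≠ 0 := by rintro rfl; simp at hr; exact hm0 hr
    have hmr : m = -r ^ 2 := by linarith
    obtain ⟨s, hs⟩ := root r (e ^ 4 + e ^ 2 * r ^ 2 - r ^ 4) hr0 (by rw [← hM, hmr]; ring)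
    have hcer : IsCoprime e r := by
      rw [hmr] at hcme
      exact ((IsCoprime.pow_left_iff (by norm_num)).mp ((IsCoprime.neg_left_iff _ _).mp hcme)).symm
    rcases quartic _ e r s rfl hcer hs with h1 | ⟨h1, h2⟩
    · exact absurd h1 hr0
    · exact fin (by rw [hmr, h1]; norm_num) h2
  · obtain ⟨r, hmr⟩ := aux_sq hcQm hpos hM
    have hr0 : r ≠ 0 := by rintro rfl; simp at hmr; exact hm0 hmr
    obtain ⟨s, hs⟩ := root r (r ^ 4 + r ^ 2 * e ^ 2 - e ^ 4) hr0 (by rw [← hM, hmr]; ring)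
    have hcer : IsCoprime r e := by
      rw [hmr] at hcme
      exact (IsCoprime.pow_left_iff (by norm_num)).mp hcme
    rcases quartic _ r e s rfl hcer hs with h1 | ⟨h1, h2⟩
    · exact absurd h1 he0
    · exact fin (by rw [hmr, h2]; norm_num) h1

theorem stmt_11 :
    ∀ x y : ℚ,
      y ^ 2 = x ^ 8 + 4 * x ^ 7 + 6 * x ^ 6 + 4 * x ^ 5 - 7 * x ^ 4
          - 16 * x ^ 3 + 8 * x ↔
        (x = -2 ∧ y = 0) ∨ (x = -1 ∧ y = 0) ∨ (x = 0 ∧ y = 0) ∨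
        (x = 1 ∧ y = 0) := by
  intro x y
  constructor
  swap
  · rintro (⟨rfl, rfl⟩ | ⟨rfl, rfl⟩ | ⟨rfl, rfl⟩ | ⟨rfl, rfl⟩) <;> norm_num
  intro h
  obtain ⟨u, hu⟩ : ∃ u, u = x ^ 2 + x := ⟨_, rfl⟩
  have hf : y ^ 2 = u * (u - 2) * (u ^ 2 + 2 * u - 4) := by rw [h, hu]; ring
  have hy : u * (u - 2) = 0 → y = 0 := by
    intro h0; rw [h0, zero_mul] at hf; exact pow_eq_zero_iff two_ne_zero |>.mp hf
  by_cases hu0 : u = 0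
  · have hy0 := hy (by rw [hu0]; ring)
    have : x * (x + 1) = 0 := by rw [← hu0, hu]; ring
    rcases mul_eq_zero.mp this with h1 | h1
    · exact Or.inr (Or.inr (Or.inl ⟨h1, hy0⟩))
    · exact Or.inr (Or.inl ⟨by linarith, hy0⟩)
  have hE : (y / u ^ 2) ^ 2 = (2 / u - 1) * ((2 / u - 1) ^ 2 + (2 / u - 1) - 1) := by
    rw [div_pow, hf]; field_simp; ring
  rcases ec _ _ hE with h1 | h1 | h1
  · have hu2 : u = 2 := by field_simp at h1; linarith
    have hy0 := hy (by rw [hu2]; ring)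
    have : (x - 1) * (x + 2) = 0 := by linarith
    rcases mul_eq_zero.mp this with h1 | h1
    · exact Or.inr (Or.inr (Or.inr ⟨by linarith, hy0⟩))
    · exact Or.inl ⟨by linarith, hy0⟩
  · exfalso
    have hu2 : u = 1 := by field_simp at h1; linarith
    have h5 : (2 * x + 1) ^ 2 = 5 := by linarith
    have : IsSquare ((5 : ℤ) : ℚ) := ⟨2 * x + 1, by push_cast; linarith⟩
    obtain ⟨n, hn⟩ := Rat.isSquare_intCast_iff.mp this
    have h1 : n < 3 := by nlinarith
    have h2 : -3 < n := by nlinarith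
    interval_cases n <;> omega
  · exfalso
    have : 2 / u = 0 := by linarith
    simp [hu0] at this
end

section
/- Let f(x) = (x² − x + 1)·(x⁶ + x⁵ − 6x⁴ − 3x³ + 14x² − 7x + 1). For all x, y ∈ ℚ with y² = f(x), one has x = 0 or x = 1. -/
lemma four_aux {m n A B : ℤ} (hm : m ≠ 0) (hc : IsCoprime m n) (h : m * n = A * B) :
    ∃ a b c d : ℤ, m = a * b ∧ n = c * d ∧ A = a * c ∧ B = b * d ∧ IsCoprime a d ∧
      IsCoprime b c := by
  obtain ⟨a, b, ⟨c, rfl⟩, ⟨d, rfl⟩, rfl⟩ :=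
    exists_dvd_and_dvd_of_dvd_mul (Dvd.intro n h : m ∣ A * B)
  have hn : n = c * d := by
    apply mul_left_cancel₀ hm
    rw [h]; ring
  subst hn
  refine ⟨a, b, c, d, rfl, rfl, rfl, rfl, ?_, ?_⟩
  · exact (hc.of_mul_left_left).of_mul_right_right
  · exact (hc.of_mul_left_right).of_mul_right_left

lemma split_aux {a d F G : ℤ} (hd : d ≠ 0) (hc : IsCoprime a d) (h : a ^ 2 * F = d ^ 2 * G) :
    ∃ k : ℤ, F = k * d ^ 2 ∧ G = k * a ^ 2 := by
  have h1 : d ^ 2 ∣ F := (hc.symm.pow (m := 2) (n := 2)).dvd_of_dvd_mul_left (Dvd.intro G h.symm)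
  obtain ⟨k, rfl⟩ := h1
  refine ⟨k, by ring, ?_⟩
  apply mul_left_cancel₀ (pow_ne_zero 2 hd)
  rw [← h]; ring

lemma k_aux {k b c u v : ℤ} (hc : IsCoprime b c) (hb : b ≠ 0) (hu : 0 ≤ u)
    (h1 : 7 * b ^ 2 = k * u) (h2 : 7 * c ^ 2 = k * v) : k = 1 ∨ k = 7 := by
  have hk : k ∣ 7 := by
    obtain ⟨r, s, hrs⟩ := hc.pow (m := 2) (n := 2)
    refine ⟨r * u + s * v, ?_⟩
    linear_combination (-7) * hrs + r * h1 + s * h2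
  have hpos : 0 < k := by
    by_contra hneg
    have : 0 < b ^ 2 := by positivity
    nlinarith [mul_nonneg hu (by linarith : (0:ℤ) ≤ -k)]
  have hle : k ≤ 7 := Int.le_of_dvd (by norm_num) hk
  interval_cases k <;> revert hk <;> norm_num

lemma mod7_aux {a d : ℤ} (e : ℤ) (he : e = 1 ∨ e = 9) (hc : IsCoprime a d)
    (h : (7 : ℤ) ∣ e * a ^ 2 + d ^ 2) : False := by
  have h0 : (e * a ^ 2 + d ^ 2) % 7 = 0 := Int.emod_eq_zero_of_dvd h
  have key : a % 7 = 0 ∧ d % 7 = 0 := by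
    have ha : a % 7 = 0 ∨ a % 7 = 1 ∨ a % 7 = 2 ∨ a % 7 = 3 ∨ a % 7 = 4 ∨ a % 7 = 5 ∨ a % 7 = 6 := by
      omega
    have hd : d % 7 = 0 ∨ d % 7 = 1 ∨ d % 7 = 2 ∨ d % 7 = 3 ∨ d % 7 = 4 ∨ d % 7 = 5 ∨ d % 7 = 6 := by
      omega
    rcases he with rfl | rfl <;>
    rcases ha with ha | ha | ha | ha | ha | ha | ha <;>
    rcases hd with hd | hd | hd | hd | hd | hd | hd <;>
    simp [pow_two, Int.add_emod, Int.mul_emod, ha, hd] at h0 ⊢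
  have hu := hc.isUnit_of_dvd' (Int.dvd_of_emod_eq_zero key.1) (Int.dvd_of_emod_eq_zero key.2)
  rw [Int.isUnit_iff] at hu
  omega

/-- First descent configuration. -/
lemma L1 {m n A B : ℤ} (hm : m ≠ 0) (hn : n ≠ 0) (hc : IsCoprime m n) (h : m * n = A * B)
    (h2 : 16 * m ^ 2 - n ^ 2 = 9 * A ^ 2 - B ^ 2) :
    ∃ Y Z V W : ℤ, Y ≠ 0 ∧ Z ≠ 0 ∧ Y ^ 2 + 9 * Z ^ 2 = V ^ 2 ∧ Y ^ 2 + 16 * Z ^ 2 = W ^ 2 ∧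
      |Y * Z| ≤ |m * n| := by
  obtain ⟨a, b, c, d, rfl, rfl, rfl, rfl, had, hbc⟩ := four_aux hm hc h
  have ha : a ≠ 0 := left_ne_zero_of_mul hm
  have hb : b ≠ 0 := right_ne_zero_of_mul hm
  have hc0 : c ≠ 0 := left_ne_zero_of_mul hn
  have hd : d ≠ 0 := right_ne_zero_of_mul hn
  obtain ⟨k, h3, h4⟩ := split_aux (F := 16 * b ^ 2 - 9 * c ^ 2) (G := c ^ 2 - b ^ 2) hd had
    (by linear_combination h2)
  have h5 : 7 * b ^ 2 = k * (9 * a ^ 2 + d ^ 2) := by linear_combination h3 + 9 * h4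
  have h6 : 7 * c ^ 2 = k * (16 * a ^ 2 + d ^ 2) := by linear_combination h3 + 16 * h4
  rcases k_aux hbc hb (by positivity) h5 h6 with rfl | rfl
  · exact (mod7_aux 9 (Or.inr rfl) had ⟨b ^ 2, by linarith⟩).elim
  · refine ⟨d, a, b, c, hd, ha, by linarith, by linarith, ?_⟩
    have : a * b * (c * d) = (d * a) * (b * c) := by ring
    rw [this, abs_mul (d * a)]
    have : 1 ≤ |b * c| := Int.one_le_abs (mul_ne_zero hb hc0)
    nlinarith [abs_nonneg (d * a)]

/-- Second descent configuration. -/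
lemma L2 {m n A B : ℤ} (hm : m ≠ 0) (hn : n ≠ 0) (hc : IsCoprime m n) (h : m * n = A * B)
    (h2 : 16 * m ^ 2 - n ^ 2 = A ^ 2 - 9 * B ^ 2) :
    ∃ Y Z V W : ℤ, Y ≠ 0 ∧ Z ≠ 0 ∧ Y ^ 2 + 9 * Z ^ 2 = V ^ 2 ∧ Y ^ 2 + 16 * Z ^ 2 = W ^ 2 ∧
      |Y * Z| ≤ |m * n| := by
  obtain ⟨a, b, c, d, rfl, rfl, rfl, rfl, had, hbc⟩ := four_aux hm hc h
  have ha : a ≠ 0 := left_ne_zero_of_mul hm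
  have hb : b ≠ 0 := right_ne_zero_of_mul hm
  have hc0 : c ≠ 0 := left_ne_zero_of_mul hn
  have hd : d ≠ 0 := right_ne_zero_of_mul hn
  obtain ⟨k, h3, h4⟩ := split_aux (F := 16 * b ^ 2 - c ^ 2) (G := c ^ 2 - 9 * b ^ 2) hd had
    (by linear_combination h2)
  have h5 : 7 * b ^ 2 = k * (1 * a ^ 2 + d ^ 2) := by linear_combination h3 + h4
  have h6 : 7 * c ^ 2 = k * (16 * a ^ 2 + 9 * d ^ 2) := by linear_combination 9 * h3 + 16 * h4
  rcases k_aux hbc hb (by positivity) h5 h6 with rfl | rfl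
  · exact (mod7_aux 1 (Or.inl rfl) had ⟨b ^ 2, by linarith⟩).elim
  · refine ⟨3 * d, a, 3 * b, c, by positivity, ha, by nlinarith, by nlinarith, ?_⟩
    have : a * b * (c * d) = (d * a) * (b * c) := by ring
    rw [this, abs_mul (d * a), mul_assoc, abs_mul 3, abs_mul b]
    have h7 : 1 ≤ |b| := Int.one_le_abs hb
    have ha2 : 0 < a ^ 2 := by positivity
    have hd2 : 0 < d ^ 2 := by positivity
    have h8 : 3 ≤ |c| := by
      apply le_abs.2
      by_contra hcon
      push Not at hcon
      nlinarith
    have h9 : 3 ≤ |b| * |c| := by nlinarith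
    have h10 : |(3:ℤ)| = 3 := rfl
    rw [h10]
    nlinarith [abs_nonneg (d * a)]

/-- Third configuration: impossible modulo 8. -/
lemma L3 {m n A B : ℤ} (hm : m ≠ 0) (hn : n % 2 = 1) (hc : IsCoprime m n) (h : m * n = A * B)
    (h2 : 16 * m ^ 2 - n ^ 2 = 3 * (A ^ 2 - B ^ 2)) : False := by
  obtain ⟨a, b, c, d, rfl, rfl, rfl, rfl, had, hbc⟩ := four_aux hm hc h
  have hn0 : c * d ≠ 0 := by intro h0; rw [h0] at hn; simp at hn
  have hb : b ≠ 0 := right_ne_zero_of_mul hm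
  have hd : d ≠ 0 := right_ne_zero_of_mul hn0
  obtain ⟨k, h3, h4⟩ := split_aux (F := 16 * b ^ 2 - 3 * c ^ 2) (G := c ^ 2 - 3 * b ^ 2) hd had
    (by linear_combination h2)
  have h5 : 7 * b ^ 2 = k * (3 * a ^ 2 + d ^ 2) := by linear_combination h3 + 3 * h4
  have h6 : 7 * c ^ 2 = k * (16 * a ^ 2 + 3 * d ^ 2) := by linear_combination 3 * h3 + 16 * h4
  have hodd := Int.odd_mul.1 (Int.odd_iff.2 hn)
  have hc8 := Int.sq_mod_four_eq_one_of_odd hodd.1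
  have hd8 := Int.sq_mod_four_eq_one_of_odd hodd.2
  have hc9 := Int.eight_dvd_sq_sub_one_of_odd hodd.1
  have hd9 := Int.eight_dvd_sq_sub_one_of_odd hodd.2
  rcases k_aux hbc hb (by positivity) h5 h6 with rfl | rfl <;> omega

lemma step {Y Z V W : ℤ} (hY : Y % 2 = 1) (hZ : Z ≠ 0) (hc : IsCoprime Y Z)
    (h1 : Y ^ 2 + 9 * Z ^ 2 = V ^ 2) (h2 : Y ^ 2 + 16 * Z ^ 2 = W ^ 2) :
    ∃ Y' Z' V' W' : ℤ, Y' ≠ 0 ∧ Z' ≠ 0 ∧ Y' ^ 2 + 9 * Z' ^ 2 = V' ^ 2 ∧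
      Y' ^ 2 + 16 * Z' ^ 2 = W' ^ 2 ∧ |Y' * Z'| < |Z| := by
  have hYo : Odd Y := Int.odd_iff.2 hY
  have hZe : Z % 2 = 0 := by
    by_contra hcon
    have hZo : Odd Z := Int.odd_iff.2 (by omega)
    have e1 := Int.eight_dvd_sq_sub_one_of_odd hYo
    have e2 := Int.eight_dvd_sq_sub_one_of_odd hZo
    rcases Int.even_or_odd V with hV | hV
    · obtain ⟨r, rfl⟩ := hV
      have : (r + r) ^ 2 = 4 * r ^ 2 := by ring
      omega
    · have e3 := Int.eight_dvd_sq_sub_one_of_odd hV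
      omega
  have hY0 : Y ≠ 0 := by rintro rfl; simp at hY
  have hY2 : 0 < Y ^ 2 := by positivity
  have hco2 : IsCoprime Y 2 := by
    refine ⟨1, -(Y / 2), ?_⟩
    omega
  have hco4 : IsCoprime Y (4 * Z) := by
    have : IsCoprime Y (2 * 2 * Z) := (hco2.mul_right hco2).mul_right hc
    simpa using this
  have hW : 0 < |W| := by
    apply abs_pos.2; rintro rfl; nlinarith [sq_nonneg Z]
  have hV : 0 < |V| := by
    apply abs_pos.2; rintro rfl; nlinarith [sq_nonneg Z]
  obtain ⟨m, n, hm1, hm2, -, hg, hpar, -⟩ := PythagoreanTriple.coprime_classification'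
    (x := Y) (y := 4 * Z) (z := |W|)
    (by unfold PythagoreanTriple; rw [abs_mul_abs_self]; linarith)
    (Int.isCoprime_iff_gcd_eq_one.1 hco4) hY hW
  have hmn : IsCoprime m n := Int.isCoprime_iff_gcd_eq_one.2 hg
  have hmnZ : m * n = 2 * Z := by linarith
  have hm0 : m ≠ 0 := by rintro rfl; apply hZ; linarith
  have hn0 : n ≠ 0 := by rintro rfl; apply hZ; linarith
  obtain ⟨z, rfl⟩ : ∃ z, Z = 2 * z := ⟨Z / 2, by omega⟩
  have hz : z ≠ 0 := by rintro rfl; exact hZ rfl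
  have hzabs : |z| < |2 * z| := by
    rw [abs_mul]; have := abs_pos.2 hz; norm_num; linarith
  -- reduce to 4 ∣ m or 4 ∣ n
  have h4 : (∃ m', m = 4 * m' ∧ n % 2 = 1 ∧ m' * n = z) ∨
      (∃ n', n = 4 * n' ∧ m % 2 = 1 ∧ n' * m = z) := by
    have hd : (4 : ℤ) ∣ m * n := ⟨z, by linarith⟩
    have co : ∀ t : ℤ, t % 2 = 1 → IsCoprime (4 : ℤ) t := by
      intro t ht
      have : IsCoprime t 2 := ⟨1, -(t / 2), by omega⟩
      have := (this.mul_right this).symm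
      simpa using this
    rcases hpar with ⟨-, p⟩ | ⟨p, -⟩
    · left
      obtain ⟨m', rfl⟩ := (co n p).dvd_of_dvd_mul_right hd
      exact ⟨m', rfl, p, by linarith⟩
    · right
      obtain ⟨m', rfl⟩ := (co m p).dvd_of_dvd_mul_left hd
      exact ⟨m', rfl, p, by linarith⟩
  by_cases h3 : (3 : ℤ) ∣ Y
  · exfalso
    obtain ⟨y, rfl⟩ := h3
    have hV3 : (3 : ℤ) ∣ V := by
      apply Int.prime_three.dvd_of_dvd_pow (n := 2)
      exact ⟨3 * y ^ 2 + 3 * (2 * z) ^ 2, by linarith⟩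
    obtain ⟨v, rfl⟩ := hV3
    have hv : 0 < |v| := by
      apply abs_pos.2; rintro rfl; simp at hV
    obtain ⟨A, B, hA1, hA2, -, -⟩ := PythagoreanTriple.coprime_classification'
      (x := y) (y := 2 * z) (z := |v|)
      (by unfold PythagoreanTriple; rw [abs_mul_abs_self]; linarith)
      (Int.isCoprime_iff_gcd_eq_one.1 hc.of_mul_left_right) (by omega) hv
    have hAB : A * B = z := by linarith
    rcases h4 with ⟨m', rfl, hp, hq⟩ | ⟨m', rfl, hp, hq⟩
    · refine L3 (m := m') (n := n) (A := A) (B := B) (by rintro rfl; exact hm0 rfl) hp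
        hmn.of_mul_left_right (by linarith) ?_
      linear_combination 3 * hA1 - hm1
    · refine L3 (m := m') (n := m) (A := B) (B := A) (by rintro rfl; exact hn0 rfl) hp
        hmn.of_mul_right_right.symm (by linarith) ?_
      linear_combination hm1 - 3 * hA1
  · have hY3 : IsCoprime Y 3 := ((Int.prime_three.coprime_iff_not_dvd).2 h3).symm
    obtain ⟨A, B, hA1, hA2, -, -⟩ := PythagoreanTriple.coprime_classification'
      (x := Y) (y := 3 * (2 * z)) (z := |V|)
      (by unfold PythagoreanTriple; rw [abs_mul_abs_self]; linarith)
      (Int.isCoprime_iff_gcd_eq_one.1 (hY3.mul_right hc)) hY hV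
    have hAB : A * B = 3 * z := by linarith
    have hd : (3 : ℤ) ∣ A * B := ⟨z, hAB⟩
    have fin : ∀ p q : ℤ, p * q = z → (∃ Y' Z' V' W' : ℤ, Y' ≠ 0 ∧ Z' ≠ 0 ∧
        Y' ^ 2 + 9 * Z' ^ 2 = V' ^ 2 ∧ Y' ^ 2 + 16 * Z' ^ 2 = W' ^ 2 ∧ |Y' * Z'| ≤ |p * q|) →
        ∃ Y' Z' V' W' : ℤ, Y' ≠ 0 ∧ Z' ≠ 0 ∧ Y' ^ 2 + 9 * Z' ^ 2 = V' ^ 2 ∧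
      Y' ^ 2 + 16 * Z' ^ 2 = W' ^ 2 ∧ |Y' * Z'| < |2 * z| := by
      rintro p q rfl ⟨a, b, c, d, h1, h2, h3, h4, h5⟩
      exact ⟨a, b, c, d, h1, h2, h3, h4, h5.trans_lt hzabs⟩
    rcases Int.prime_three.dvd_or_dvd hd with ⟨A', rfl⟩ | ⟨B', rfl⟩
    · rcases h4 with ⟨m', rfl, hp, hq⟩ | ⟨m', rfl, hp, hq⟩
      · refine fin m' n hq (L1 (A := A') (B := B) (by rintro rfl; exact hm0 rfl) hn0
          hmn.of_mul_left_right (by linarith) ?_)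
        linear_combination hA1 - hm1
      · refine fin m' m hq (L2 (A := B) (B := A') (by rintro rfl; exact hn0 rfl) hm0
          hmn.of_mul_right_right.symm (by linarith) ?_)
        linear_combination hm1 - hA1
    · rcases h4 with ⟨m', rfl, hp, hq⟩ | ⟨m', rfl, hp, hq⟩
      · refine fin m' n hq (L2 (A := A) (B := B') (by rintro rfl; exact hm0 rfl) hn0
          hmn.of_mul_left_right (by linarith) ?_)
        linear_combination hA1 - hm1
      · refine fin m' m hq (L1 (A := B') (B := A) (by rintro rfl; exact hn0 rfl) hm0
          hmn.of_mul_right_right.symm (by linarith) ?_)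
        linear_combination hm1 - hA1

lemma descent (N : ℕ) : ∀ Y Z V W : ℤ, Y ≠ 0 → Z ≠ 0 → |Y * Z| ≤ N →
    Y ^ 2 + 9 * Z ^ 2 = V ^ 2 → Y ^ 2 + 16 * Z ^ 2 = W ^ 2 → False := by
  induction N with
  | zero =>
    intro Y Z V W hY hZ h
    have := abs_pos.2 (mul_ne_zero hY hZ)
    push_cast at h
    intros
    linarith
  | succ N ih =>
    -- coprime case
    have key : ∀ Y Z V W : ℤ, IsCoprime Y Z → Y ≠ 0 → Z ≠ 0 → |Y * Z| ≤ (N + 1 : ℕ) →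
        Y ^ 2 + 9 * Z ^ 2 = V ^ 2 → Y ^ 2 + 16 * Z ^ 2 = W ^ 2 → False := by
      intro Y Z V W hc hY hZ hN h1 h2
      push_cast at hN
      rcases Int.emod_two_eq_zero_or_one Y with hpar | hpar
      · have hZo : Odd Z := by
          rw [← Int.not_even_iff_odd]
          intro he
          have hu := hc.isUnit_of_dvd' (Int.dvd_of_emod_eq_zero hpar) he.two_dvd
          rw [Int.isUnit_iff] at hu
          omega
        obtain ⟨y, rfl⟩ : ∃ y, Y = 2 * y := ⟨Y / 2, by omega⟩
        have hVo : Odd V := by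
          rw [← Int.not_even_iff_odd]
          rintro ⟨v, rfl⟩
          have e1 := Int.eight_dvd_sq_sub_one_of_odd hZo
          have e2 : (v + v) ^ 2 = 4 * v ^ 2 := by ring
          have e3 : (2 * y) ^ 2 = 4 * y ^ 2 := by ring
          omega
        have hye : Even y := by
          by_contra hyo
          rw [Int.not_even_iff_odd] at hyo
          have e1 := Int.eight_dvd_sq_sub_one_of_odd hZo
          have e2 := Int.eight_dvd_sq_sub_one_of_odd hVo
          have e4 := Int.eight_dvd_sq_sub_one_of_odd hyo
          have e3 : (2 * y) ^ 2 = 4 * y ^ 2 := by ring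
          omega
        obtain ⟨x, rfl⟩ := hye
        have hW : (4 : ℤ) ∣ W := by
          rw [← Int.pow_dvd_pow_iff (n := 2) (by norm_num)]
          exact ⟨x ^ 2 + Z ^ 2, by linarith⟩
        obtain ⟨w, rfl⟩ := hW
        have hx : x ≠ 0 := by rintro rfl; exact hY rfl
        refine ih (3 * Z) x (3 * w) V (by positivity) hx ?_ (by nlinarith) (by nlinarith)
        have e1 : 2 * (x + x) * Z = 4 * (x * Z) := by ring
        have e2 : 3 * Z * x = 3 * (x * Z) := by ring
        rw [e1, abs_mul] at hN
        rw [e2, abs_mul]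
        have := Int.one_le_abs (mul_ne_zero hx hZ)
        norm_num at hN ⊢
        linarith
      · obtain ⟨Y', Z', V', W', g1, g2, g3, g4, g5⟩ := step hpar hZ hc h1 h2
        refine ih Y' Z' V' W' g1 g2 ?_ g3 g4
        rw [abs_mul] at hN
        have := Int.one_le_abs hY
        nlinarith [abs_nonneg Z]
    intro Y Z V W hY hZ hN h1 h2
    have hg : 0 < Int.gcd Y Z := Int.gcd_pos_of_ne_zero_left _ hY
    obtain ⟨y, z, hco, hy, hz⟩ := Int.exists_gcd_one hg
    set g : ℤ := (Int.gcd Y Z : ℤ) with hgdef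
    have hg' : 0 < g := by rw [hgdef]; exact Int.natCast_pos.2 hg
    have hV : g ∣ V := by
      rw [← Int.pow_dvd_pow_iff (n := 2) (by norm_num)]
      exact ⟨y ^ 2 + 9 * z ^ 2, by rw [← h1, hy, hz]; ring⟩
    have hW : g ∣ W := by
      rw [← Int.pow_dvd_pow_iff (n := 2) (by norm_num)]
      exact ⟨y ^ 2 + 16 * z ^ 2, by rw [← h2, hy, hz]; ring⟩
    obtain ⟨v, hv⟩ := hV
    obtain ⟨w, hw⟩ := hW
    clear_value g
    subst hy hz hv hw
    have hg2 : g ^ 2 ≠ 0 := by positivity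
    refine key y z v w (Int.isCoprime_iff_gcd_eq_one.2 hco) (left_ne_zero_of_mul hY)
      (left_ne_zero_of_mul hZ) ?_ ?_ ?_
    · refine le_trans ?_ hN
      have e : y * g * (z * g) = (y * z) * (g * g) := by ring
      rw [e, abs_mul (y * z), abs_mul g, abs_of_pos hg']
      exact le_mul_of_one_le_right (abs_nonneg _) (by nlinarith)
    · apply mul_left_cancel₀ hg2; linear_combination h1
    · apply mul_left_cancel₀ hg2; linear_combination h2

lemma ratS (r v w : ℚ) (h1 : r ^ 2 + 9 = v ^ 2) (h2 : r ^ 2 + 16 = w ^ 2) : r = 0 := by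
  by_contra hr
  have hd : (r.den : ℚ) ≠ 0 := by exact_mod_cast r.den_nz
  have hsq : ∀ (c : ℤ) (v : ℚ), r ^ 2 + c = v ^ 2 →
      ∃ V : ℤ, r.num ^ 2 + c * (r.den : ℤ) ^ 2 = V ^ 2 := by
    intro c v h
    have : IsSquare ((r.num ^ 2 + c * (r.den : ℤ) ^ 2 : ℤ) : ℚ) := by
      refine ⟨v * r.den, ?_⟩
      have hn : (r.num : ℚ) = r * r.den := (Rat.mul_den_eq_num r).symm
      push_cast
      rw [hn]
      linear_combination (r.den : ℚ) ^ 2 * h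
    rw [Rat.isSquare_intCast_iff] at this
    obtain ⟨V, hV⟩ := this
    exact ⟨V, by rw [hV]; ring⟩
  obtain ⟨V, hV⟩ := hsq 9 v (by exact_mod_cast h1)
  obtain ⟨W, hW⟩ := hsq 16 w (by exact_mod_cast h2)
  exact descent (|r.num * (r.den : ℤ)|).toNat r.num r.den V W (Rat.num_ne_zero.2 hr)
    (by exact_mod_cast r.den_nz) (Int.self_le_toNat _) hV hW

/-- Rational points on `Y² = X (X + 9) (X + 16)`. -/
lemma ellX (X Y : ℚ) (h : Y ^ 2 = X * (X + 9) * (X + 16)) :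
    X = 0 ∨ X = -9 ∨ X = -16 ∨ X = 12 ∨ X = -12 := by
  by_cases hY : Y = 0
  · subst hY
    have : X * (X + 9) * (X + 16) = 0 := by rw [← h]; norm_num
    rcases mul_eq_zero.1 this with h0 | h0
    · rcases mul_eq_zero.1 h0 with h0 | h0
      · exact Or.inl h0
      · right; left; linarith
    · right; right; left; linarith
  · have hr := ratS ((X ^ 2 - 144) / (2 * Y)) ((X ^ 2 + 18 * X + 144) / (2 * Y))
      ((X ^ 2 + 32 * X + 144) / (2 * Y))
      (by field_simp; linear_combination 36 * h)
      (by field_simp; linear_combination 64 * h)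
    have h0 : X ^ 2 - 144 = 0 := by
      rcases div_eq_zero_iff.1 hr with h0 | h0
      · exact h0
      · exact absurd h0 (by simpa using hY)
    have : (X - 12) * (X + 12) = 0 := by linarith
    rcases mul_eq_zero.1 this with h0 | h0
    · right; right; right; left; linarith
    · right; right; right; right; linarith

lemma quartic_s13 (t w : ℚ) (h : w ^ 2 = (t ^ 2 - 3 * t + 9) * (t ^ 2 + t + 1)) :
    t = 0 ∨ t = 2 ∨ t = -3 / 2 := by
  obtain ⟨p, hp⟩ : ∃ p, p = w + t ^ 2 - t := ⟨_, rfl⟩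
  have hw : w = p - t ^ 2 + t := by linarith
  subst hw
  have hq : t ^ 2 * (2 * p + 6) + t * (6 - 2 * p) + 9 - p ^ 2 = 0 := by linear_combination -h
  have := ellX (2 * p - 6) (2 * (t * (2 * p + 6) + (3 - p)))
    (by linear_combination 4 * (2 * p + 6) * hq)
  rcases this with h0 | h0 | h0 | h0 | h0
  · obtain rfl : p = 3 := by linarith
    left
    exact pow_eq_zero_iff (n := 2) (by norm_num) |>.1 (by linarith)
  · obtain rfl : p = -3 / 2 := by linarith
    right; right
    have : (t + 3 / 2) ^ 2 = 0 := by linarith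
    have := pow_eq_zero_iff (n := 2) (by norm_num) |>.1 this
    linarith
  · obtain rfl : p = -5 := by linarith
    right; left
    have : (t - 2) ^ 2 = 0 := by linarith
    have := pow_eq_zero_iff (n := 2) (by norm_num) |>.1 this
    linarith
  · obtain rfl : p = 9 := by linarith
    have : (t - 2) * (t + 3 / 2) = 0 := by linarith
    rcases mul_eq_zero.1 this with h1 | h1
    · right; left; linarith
    · right; right; linarith
  · obtain rfl : p = -3 := by linarith
    left; linarith

lemma cub (a b c : ℤ) (x : ℚ) (h : x ^ 3 + a * x ^ 2 + b * x + c = 0) :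
    ∃ n : ℤ, x = n := by
  have hi : IsIntegral ℤ x := by
    refine ⟨Polynomial.X ^ 3 + (Polynomial.C a * Polynomial.X ^ 2 + Polynomial.C b * Polynomial.X
      + Polynomial.C c), ?_, ?_⟩
    · monicity!
    · simp only [Polynomial.eval₂_add, Polynomial.eval₂_mul, Polynomial.eval₂_pow,
        Polynomial.eval₂_X, Polynomial.eval₂_C]
      simp only [algebraMap_int_eq, eq_intCast]
      linarith
  obtain ⟨n, hn⟩ := IsIntegrallyClosed.isIntegral_iff.1 hi
  exact ⟨n, by simpa using hn.symm⟩

/-- Subsection 6.3: every affine rational point of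
`y² = (x² - x + 1)(x⁶ + x⁵ - 6x⁴ - 3x³ + 14x² - 7x + 1)` has `x = 0` or
`x = 1`. -/
theorem stmt_13 :
    ∀ x y : ℚ,
      y ^ 2 = (x ^ 2 - x + 1) * (x ^ 6 + x ^ 5 - 6 * x ^ 4 - 3 * x ^ 3
          + 14 * x ^ 2 - 7 * x + 1) →
      x = 0 ∨ x = 1 := by
  intro x y h
  by_contra hcon
  push Not at hcon
  obtain ⟨h0, h1⟩ := hcon
  have h1' : x - 1 ≠ 0 := sub_ne_zero.2 h1
  have ht := quartic_s13 ((x ^ 3 - 3 * x + 1) / (x * (x - 1)))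
    (y * (x ^ 2 - x + 1) / (x * (x - 1)) ^ 2)
    (by field_simp; linear_combination (x ^ 2 - x + 1) ^ 2 * h)
  rcases ht with ht | ht | ht
  · have e : x ^ 3 - 3 * x + 1 = 0 := by field_simp at ht; linarith
    obtain ⟨n, rfl⟩ := cub 0 (-3) 1 x (by push_cast; linarith)
    have e' : n ^ 3 - 3 * n + 1 = 0 := by exact_mod_cast e
    have : n ∣ 1 := ⟨3 - n ^ 2, by linarith⟩
    rcases Int.isUnit_iff.1 (isUnit_of_dvd_one this) with rfl | rfl <;> norm_num at e'
  · have e : x ^ 3 - 2 * x ^ 2 - x + 1 = 0 := by field_simp at ht; linarith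
    obtain ⟨n, rfl⟩ := cub (-2) (-1) 1 x (by push_cast; linarith)
    have e' : n ^ 3 - 2 * n ^ 2 - n + 1 = 0 := by exact_mod_cast e
    have : n ∣ 1 := ⟨1 + 2 * n - n ^ 2, by linarith⟩
    rcases Int.isUnit_iff.1 (isUnit_of_dvd_one this) with rfl | rfl <;> norm_num at e'
  · have e : 2 * x ^ 3 + 3 * x ^ 2 - 9 * x + 2 = 0 := by field_simp at ht; linarith
    obtain ⟨n, hn⟩ := cub 3 (-18) 8 (2 * x) (by push_cast; linarith)
    have e1 : (n : ℚ) ^ 3 + 3 * n ^ 2 - 18 * n + 8 = 0 := by rw [← hn]; linarith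
    have e' : n ^ 3 + 3 * n ^ 2 - 18 * n + 8 = 0 := by exact_mod_cast e1
    have hd : n ∣ 8 := ⟨18 - 3 * n - n ^ 2, by linarith⟩
    have hu : n ≤ 8 := Int.le_of_dvd (by norm_num) hd
    have hl : -n ≤ 8 := Int.le_of_dvd (by norm_num) (neg_dvd.2 hd)
    have hl' : -8 ≤ n := by linarith
    clear hn e1 hd hl
    interval_cases n <;> norm_num at e'
end

section
/- The hyperelliptic curve C : y² = −4x⁸ + 8x⁷ − 3x⁶ − 16x⁵ + 26x⁴ − 16x³ − 3x² + 8x − 4 has no affine rational points: for all x, y ∈ ℚ, y² ≠ −4x⁸ + 8x⁷ − 3x⁶ − 16x⁵ + 26x⁴ − 16x³ − 3x² + 8x − 4. Since the leading coefficient −4 is not a square in ℚ, C also has no rational points at infinity, so C(ℚ) = ∅. -/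
lemma cop_r {u v w : ℤ} (h : IsCoprime u v) (e : v = w) : IsCoprime u w := e ▸ h

lemma cop_l {u v w : ℤ} (h : IsCoprime u v) (e : u = w) : IsCoprime w v := e ▸ h

lemma aux_prime (a b : ℤ) (hab : IsCoprime a b) (p : ℕ) (hp : p.Prime)
    (hd : (p : ℤ) ∣ a ^ 2 - a * b + b ^ 2) : p % 3 ≠ 2 := by
  intro h2
  have : Fact p.Prime := ⟨hp⟩
  have h0 : (a : ZMod p) ^ 2 - a * b + b ^ 2 = 0 := by
    have := (ZMod.intCast_zmod_eq_zero_iff_dvd (a ^ 2 - a * b + b ^ 2) p).2 hd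
    push_cast at this
    exact this
  have hb : (b : ZMod p) ≠ 0 := by
    intro hb
    have ha : (a : ZMod p) = 0 := by
      rw [hb] at h0
      have : (a : ZMod p) ^ 2 = 0 := by linear_combination h0
      exact pow_eq_zero_iff (two_ne_zero) |>.1 this
    obtain ⟨u, v, huv⟩ := hab
    have : ((u * a + v * b : ℤ) : ZMod p) = 1 := by rw [huv]; simp
    push_cast at this
    rw [ha, hb] at this
    simp at this
  set z : ZMod p := -a / b with hz
  have hz1 : z ^ 2 + z + 1 = 0 := by
    rw [hz]; field_simp; linear_combination h0
  have hz3 : z ^ 3 = 1 := by linear_combination (z - 1) * hz1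
  have hz0 : z ≠ 0 := by
    intro h; rw [h] at hz3; simp at hz3
  have hf : z ^ (p - 1) = 1 := ZMod.pow_card_sub_one_eq_one hz0
  obtain ⟨k, hk⟩ : ∃ k, p - 1 = 3 * k + 1 := ⟨(p - 1) / 3, by omega⟩
  rw [hk, pow_succ, pow_mul, hz3, one_pow, one_mul] at hf
  rw [hf] at hz1
  have h3 : ((3 : ℕ) : ZMod p) = 0 := by push_cast; linear_combination hz1
  rw [ZMod.natCast_eq_zero_iff] at h3
  have := (Nat.prime_dvd_prime_iff_eq hp Nat.prime_three).1 h3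
  omega

lemma aux_div (n : ℕ) : n % 3 = 2 → ∃ p : ℕ, p.Prime ∧ p ∣ n ∧ p % 3 = 2 := by
  induction n using Nat.strong_induction_on with
  | _ n ih =>
    intro h
    have hn : n ≠ 1 := by omega
    have hm := Nat.minFac_prime hn
    obtain ⟨k, hk⟩ := Nat.minFac_dvd n
    by_cases h2 : n.minFac % 3 = 2
    · exact ⟨_, hm, Nat.minFac_dvd n, h2⟩
    · have hk2 : k % 3 = 2 := by
        have h5 : (n.minFac % 3) * (k % 3) % 3 = 2 := by rw [← Nat.mul_mod, ← hk, h]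
        have : n.minFac % 3 < 3 := Nat.mod_lt _ (by norm_num)
        have : k % 3 < 3 := Nat.mod_lt _ (by norm_num)
        generalize n.minFac % 3 = u at *
        generalize k % 3 = v at *
        interval_cases u <;> interval_cases v <;> omega
      have hlt : k < n := by
        have := hm.two_le
        have : 0 < k := by omega
        nlinarith
      obtain ⟨p, hp, hpk, hp2⟩ := ih k hlt hk2
      exact ⟨p, hp, hpk.trans ⟨n.minFac, by rw [mul_comm]; exact hk⟩, hp2⟩

lemma aux_mod (a b m : ℤ) (hab : IsCoprime a b) (hm : 0 < m)
    (hd : m ∣ a ^ 2 - a * b + b ^ 2) : m % 3 ≠ 2 := by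
  intro h
  lift m to ℕ using hm.le
  obtain ⟨p, hp, hpm, hp2⟩ := aux_div m (by omega)
  exact aux_prime a b hab p hp ((Int.natCast_dvd_natCast.2 hpm).trans hd) hp2

lemma aux_nine (a b : ℤ) (hab : IsCoprime a b) : ¬ (9 : ℤ) ∣ a ^ 2 - a * b + b ^ 2 := by
  intro h
  have h4 : (3 : ℤ) ∣ a + b := by
    refine Int.prime_three.dvd_of_dvd_pow (n := 2) ?_
    have : (a + b) ^ 2 = (a ^ 2 - a * b + b ^ 2) + 3 * (a * b) := by ring
    rw [this]
    exact dvd_add ((by norm_num : (3 : ℤ) ∣ 9).trans h) (dvd_mul_right _ _)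
  obtain ⟨c, hc⟩ := h4
  obtain ⟨d, hd⟩ := h
  have hb : b = 3 * c - a := by linarith
  subst hb
  have ha : (3 : ℤ) ∣ a ^ 2 := ⟨d - c ^ 2 * 1 + a * c * 1 - 0, by nlinarith⟩
  have ha := Int.prime_three.dvd_of_dvd_pow ha
  have hb : (3 : ℤ) ∣ 3 * c - a := dvd_sub (dvd_mul_right _ _) ha
  have := hab.isUnit_of_dvd' ha hb
  exact Int.prime_three.not_isUnit this

/-- The final congruence argument. -/
lemma aux_final (A B E : ℤ) (hA : A % 3 ≠ 2) (hB : B % 3 ≠ 2) (h9 : ¬ (9 : ℤ) ∣ A * B)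
    (h : A ^ 3 + B ^ 3 = E ^ 3 - A * B * E) : False := by
  have key : ∀ A B E : ZMod 9, (A = 0 ∨ A = 1 ∨ A = 3 ∨ A = 4 ∨ A = 6 ∨ A = 7) →
      (B = 0 ∨ B = 1 ∨ B = 3 ∨ B = 4 ∨ B = 6 ∨ B = 7) → A * B ≠ 0 →
      A ^ 3 + B ^ 3 ≠ E ^ 3 - A * B * E := by decide
  have cls : ∀ A : ℤ, A % 3 ≠ 2 → ((A : ZMod 9) = 0 ∨ (A : ZMod 9) = 1 ∨ (A : ZMod 9) = 3 ∨
      (A : ZMod 9) = 4 ∨ (A : ZMod 9) = 6 ∨ (A : ZMod 9) = 7) := by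
    intro A hA
    have e : (A : ZMod 9) = ((A % 9 : ℤ) : ZMod 9) := (ZMod.intCast_mod A 9).symm
    rw [e]
    have : A % 9 = 0 ∨ A % 9 = 1 ∨ A % 9 = 3 ∨ A % 9 = 4 ∨ A % 9 = 6 ∨ A % 9 = 7 := by omega
    rcases this with h | h | h | h | h | h <;> rw [h] <;> decide
  refine key A B E (cls A hA) (cls B hB) ?_ (by exact_mod_cast congrArg (Int.cast : ℤ → ZMod 9) h)
  intro h0
  apply h9
  rw [← Int.cast_mul] at h0
  exact_mod_cast (ZMod.intCast_zmod_eq_zero_iff_dvd (A * B) 9).1 h0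

lemma aux_cop (a b : ℤ) (hab : IsCoprime a b) :
    IsCoprime (2 * a ^ 2 - 3 * a * b + 2 * b ^ 2) (a ^ 2 - a * b + b ^ 2) := by
  have h1 : IsCoprime a (a ^ 2 - a * b + b ^ 2) := by
    have := (IsCoprime.pow_right (n := 2) hab).add_mul_left_right (a - b)
    exact cop_r this (by ring)
  have h2 : IsCoprime b (a ^ 2 - a * b + b ^ 2) := by
    have := (IsCoprime.pow_right (n := 2) hab.symm).add_mul_left_right (b - a)
    exact cop_r this (by ring)
  have h3 := (h1.mul_left h2).neg_left.add_mul_right_left 2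
  exact cop_l h3 (by ring)

lemma aux_sq_s16 (q D N E K a b : ℤ) (hab : IsCoprime a b) (hN : N = a ^ 2 - a * b + b ^ 2)
    (hD : D = (a - b) ^ 2) (hq : q = N + D) (hqN : IsCoprime q N) (hE : q = E ^ 2)
    (hE0 : 0 < E) (hK : q * D ^ 2 - 4 * N ^ 3 = K ^ 2) : False := by
  have hNpos : 0 < N := by
    rcases eq_or_ne N 0 with h | h
    · exfalso
      have := aux_nine a b hab
      rw [← hN, h] at this
      simp at this
    · have : 0 ≤ N := by rw [hN]; nlinarith [sq_nonneg (a - b), sq_nonneg (a + b)]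
      omega
  have hpar : (2 : ℤ) ∣ E * D - K := by
    have : (2 : ℤ) ∣ (E * D - K) * (E * D + K) := ⟨2 * N ^ 3, by rw [hE] at hK; linear_combination hK⟩
    rcases Int.prime_two.dvd_or_dvd this with h | h <;> omega
  obtain ⟨s, hs⟩ := hpar
  have hK' : K = E * D - 2 * s := by linarith
  have hprod : s * (E * D - s) = N ^ 3 := by
    rw [hE, hK'] at hK
    have : 4 * (s * (E * D - s)) = 4 * N ^ 3 := by linear_combination hK
    linarith
  have hDN : IsCoprime D N := by
    have := hqN.add_mul_right_left (-1)
    exact cop_l this (by rw [hq]; ring)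
  have hEN : IsCoprime E N := by
    rw [hE] at hqN
    exact (IsCoprime.pow_left_iff (by norm_num)).1 hqN
  have hcop : IsCoprime s (E * D - s) := by
    have h1 : IsCoprime (E * D) (N ^ 3) := (hEN.mul_left hDN).pow_right
    rw [← hprod] at h1
    have h2 : IsCoprime (E * D) s := h1.of_mul_right_left
    have := h2.symm.add_mul_left_right (-1)
    exact cop_r this (by ring)
  obtain ⟨⟨A, hA⟩, ⟨B, hB⟩⟩ := Int.eq_pow_of_mul_eq_pow_odd hcop (by decide : Odd 3) hprod
  have hAB : A * B = N := by
    rw [hB, hA, ← mul_pow] at hprod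
    exact (Odd.strictMono_pow (by decide : Odd 3)).injective hprod
  have hsum : A ^ 3 + B ^ 3 = E ^ 3 - A * B * E := by
    rw [← hA, ← hB, hAB]
    have : D = E ^ 2 - N := by linarith
    rw [this]; ring
  have hsum' : 0 ≤ A ^ 3 + B ^ 3 := by
    rw [← hA, ← hB]
    have : 0 ≤ D := by rw [hD]; positivity
    have : 0 ≤ E * D := by positivity
    linarith
  have hApos : 0 < A ∧ 0 < B := by
    rw [← hAB] at hNpos
    rcases (mul_pos_iff).1 hNpos with h | h
    · exact h
    · exfalso
      have h1 : A ^ 3 < 0 := Odd.pow_neg (by decide) h.1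
      have h2 : B ^ 3 < 0 := Odd.pow_neg (by decide) h.2
      linarith
  refine aux_final A B E (aux_mod a b A hab hApos.1 ?_) (aux_mod a b B hab hApos.2 ?_) ?_ hsum
  · rw [← hN, ← hAB]; exact dvd_mul_right _ _
  · rw [← hN, ← hAB]; exact dvd_mul_left _ _
  · rw [hAB, hN]; exact aux_nine a b hab

lemma sq_of_cop (u v w : ℤ) (hu : 0 < u) (huv : IsCoprime u v) (h : u * v = w ^ 2) :
    ∃ e f : ℤ, 0 < e ∧ u = e ^ 2 ∧ v = f ^ 2 := by
  have hv : 0 ≤ v := by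
    by_contra hv
    push Not at hv
    nlinarith [sq_nonneg w, mul_neg_of_pos_of_neg hu hv]
  obtain ⟨e, he⟩ := Int.sq_of_isCoprime huv h
  obtain ⟨f, hf⟩ := Int.sq_of_isCoprime huv.symm (by rw [mul_comm]; exact h)
  have he' : u = e ^ 2 := by
    rcases he with he | he
    · exact he
    · nlinarith [sq_nonneg e]
  have hf' : v = f ^ 2 := by
    rcases hf with hf | hf
    · exact hf
    · nlinarith [sq_nonneg f]
  refine ⟨|e|, f, abs_pos.2 ?_, by rw [sq_abs]; exact he', hf'⟩
  rintro rfl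
  simp at he'
  omega

lemma aux_int (a b Y : ℤ) (hab : IsCoprime a b) (q H : ℤ)
    (hq : q = 2 * a ^ 2 - 3 * a * b + 2 * b ^ 2)
    (hH : H = -2 * a ^ 6 + a ^ 5 * b + 2 * a ^ 4 * b ^ 2 - 6 * a ^ 3 * b ^ 3 + 2 * a ^ 2 * b ^ 4
      + a * b ^ 5 - 2 * b ^ 6) (h : q * H = Y ^ 2) : False := by
  obtain ⟨N, hN⟩ : ∃ N, N = a ^ 2 - a * b + b ^ 2 := ⟨_, rfl⟩
  obtain ⟨D, hD⟩ : ∃ D, D = (a - b) ^ 2 := ⟨_, rfl⟩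
  have hqND : q = N + D := by rw [hq, hN, hD]; ring
  have hHq : H = q * D ^ 2 - 4 * N ^ 3 := by rw [hH, hq, hN, hD]; ring
  have hqN : IsCoprime q N := by rw [hq, hN]; exact aux_cop a b hab
  have hqpos : 0 < q := by
    have h0 : 0 ≤ N := by rw [hN]; nlinarith [sq_nonneg (a - b), sq_nonneg (a + b)]
    have h1 : N ≠ 0 := by
      intro h
      have := aux_nine a b hab
      rw [← hN, h] at this
      simp at this
    have h2 : 0 ≤ D := by rw [hD]; positivity
    omega
  have h4 : q % 2 = 1 ∨ q % 4 = 0 ∨ q % 4 = 2 := by omega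
  rcases h4 with h4 | h4 | h4
  · have c2 : IsCoprime q 2 := ⟨1, -(q / 2), by omega⟩
    have c : IsCoprime q H := by
      have h5 : IsCoprime q (2 ^ 2 * N ^ 3) := (c2.pow_right).mul_right hqN.pow_right
      have := h5.neg_right.add_mul_left_right (D ^ 2)
      exact cop_r this (by rw [hHq]; ring)
    obtain ⟨e, f, he, hqe, hf⟩ := sq_of_cop q H Y hqpos c h
    exact aux_sq_s16 q D N e f a b hab hN hD hqND hqN hqe he (by rw [← hHq]; exact hf)
  · obtain ⟨r, hr⟩ : ∃ r, q = 4 * r := ⟨q / 4, by omega⟩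
    have hY : (4 : ℤ) ∣ Y := by
      have : (4 : ℤ) ^ 2 ∣ Y ^ 2 := ⟨r * (r * D ^ 2 - N ^ 3), by rw [← h, hHq, hr]; ring⟩
      exact (Int.pow_dvd_pow_iff (by norm_num)).1 this
    obtain ⟨w, hw⟩ := hY
    have hrN : IsCoprime r N := by rw [hr] at hqN; exact hqN.of_mul_left_right
    have c : IsCoprime r (r * D ^ 2 - N ^ 3) := by
      have := (hrN.pow_right (n := 3)).neg_right.add_mul_left_right (D ^ 2)
      exact cop_r this (by ring)
    obtain ⟨e, f, he, hqe, hf⟩ := sq_of_cop r (r * D ^ 2 - N ^ 3) w (by omega) c (by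
      rw [hHq, hr, hw] at h
      linarith)
    exact aux_sq_s16 q D N (2 * e) (2 * f) a b hab hN hD hqND hqN (by rw [hr, hqe]; ring) (by omega)
      (by rw [hr]; linear_combination 4 * hf)
  · obtain ⟨r, hr⟩ : ∃ r, q = 2 * r := ⟨q / 2, by omega⟩
    have hY : (2 : ℤ) ∣ Y := by
      have : (2 : ℤ) ^ 2 ∣ Y ^ 2 := ⟨r * (r * D ^ 2 - 2 * N ^ 3), by rw [← h, hHq, hr]; ring⟩
      exact (Int.pow_dvd_pow_iff (by norm_num)).1 this
    obtain ⟨w, hw⟩ := hY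
    have hrN : IsCoprime r N := by rw [hr] at hqN; exact hqN.of_mul_left_right
    have c2 : IsCoprime r 2 := ⟨1, -(r / 2), by omega⟩
    have c : IsCoprime r (r * D ^ 2 - 2 * N ^ 3) := by
      have := (c2.mul_right (hrN.pow_right (n := 3))).neg_right.add_mul_left_right (D ^ 2)
      exact cop_r this (by ring)
    obtain ⟨e, f, he, hqe, hf⟩ := sq_of_cop r (r * D ^ 2 - 2 * N ^ 3) w (by omega) c (by
      rw [hHq, hr, hw] at h
      linarith)
    have hq2 : 2 * a ^ 2 - 3 * a * b + 2 * b ^ 2 = 2 * e ^ 2 := by rw [← hq, hr, hqe]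
    have hH2 : -2 * a ^ 6 + a ^ 5 * b + 2 * a ^ 4 * b ^ 2 - 6 * a ^ 3 * b ^ 3 + 2 * a ^ 2 * b ^ 4
      + a * b ^ 5 - 2 * b ^ 6 = 2 * f ^ 2 := by
      rw [← hH, hHq, hr]; linear_combination 2 * hf
    have key : ∀ a b e f : ZMod 3, 2 * a ^ 2 - 3 * a * b + 2 * b ^ 2 = 2 * e ^ 2 →
        -2 * a ^ 6 + a ^ 5 * b + 2 * a ^ 4 * b ^ 2 - 6 * a ^ 3 * b ^ 3 + 2 * a ^ 2 * b ^ 4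
      + a * b ^ 5 - 2 * b ^ 6 = 2 * f ^ 2 → a = 0 ∧ b = 0 := by decide
    obtain ⟨ha, hb⟩ := key a b e f
      (by exact_mod_cast congrArg (Int.cast : ℤ → ZMod 3) hq2)
      (by exact_mod_cast congrArg (Int.cast : ℤ → ZMod 3) hH2)
    have ha := (ZMod.intCast_zmod_eq_zero_iff_dvd a 3).1 ha
    have hb := (ZMod.intCast_zmod_eq_zero_iff_dvd b 3).1 hb
    exact Int.prime_three.not_isUnit (hab.isUnit_of_dvd' ha hb)

theorem stmt_16 :
    (∀ x y : ℚ,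
      y ^ 2 ≠ -4 * x ^ 8 + 8 * x ^ 7 - 3 * x ^ 6 - 16 * x ^ 5 + 26 * x ^ 4
        - 16 * x ^ 3 - 3 * x ^ 2 + 8 * x - 4) ∧
    ¬ ∃ r : ℚ, r ^ 2 = -4 := by
  constructor
  · intro x y h
    have hb : (x.den : ℚ) ≠ 0 := by exact_mod_cast x.den_nz
    have hx : x * x.den = x.num := Rat.mul_den_eq_num x
    have hab : IsCoprime x.num (x.den : ℤ) := Rat.isCoprime_num_den x
    generalize x.num = a at *
    obtain ⟨b, hbb⟩ : ∃ b : ℤ, b = (x.den : ℤ) := ⟨_, rfl⟩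
    have hbq : (x.den : ℚ) = (b : ℚ) := by rw [hbb]; simp
    rw [← hbb] at hab
    rw [hbq] at hb hx
    obtain ⟨M, hM⟩ : ∃ M : ℤ, M = (2 * a ^ 2 - 3 * a * b + 2 * b ^ 2) *
      (-2 * a ^ 6 + a ^ 5 * b + 2 * a ^ 4 * b ^ 2 - 6 * a ^ 3 * b ^ 3 + 2 * a ^ 2 * b ^ 4
      + a * b ^ 5 - 2 * b ^ 6) := ⟨_, rfl⟩
    have hsq : IsSquare (M : ℚ) := by
      refine ⟨y * b ^ 4, ?_⟩
      rw [hM]; push_cast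
      rw [← hx]
      linear_combination (-(b : ℚ) ^ 8) * h
    rw [Rat.isSquare_intCast_iff] at hsq
    obtain ⟨Y, hY⟩ := hsq
    exact aux_int a b Y hab _ _ rfl rfl (by rw [← hM, hY]; ring)
  · rintro ⟨r, hr⟩
    nlinarith [sq_nonneg r]
end

section
/- The set of affine rational points of the genus 2 hyperelliptic curve C : y² = x⁶ − 22x⁴ + 157x² − 360 is exactly {(3, 0), (−3, 0)}: for x, y ∈ ℚ, y² = x⁶ − 22x⁴ + 157x² − 360 holds if and only if (x, y) = (3, 0) or (x, y) = (−3, 0). -/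
lemma not_three_dvd_aux {a d : ℤ} (h : IsCoprime a d) : IsCoprime (a ^ 2 + d ^ 2) 3 := by
  have key : (a ^ 2 + d ^ 2) % 3 = 1 ∨ (a ^ 2 + d ^ 2) % 3 = 2 := by
    obtain ⟨u, v, huv⟩ := h
    have ha : a % 3 = 0 ∨ a % 3 = 1 ∨ a % 3 = 2 := by omega
    have hd : d % 3 = 0 ∨ d % 3 = 1 ∨ d % 3 = 2 := by omega
    rcases ha with ha | ha | ha <;> rcases hd with hd | hd | hd
    · exfalso
      obtain ⟨k, hk⟩ := Int.dvd_of_emod_eq_zero ha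
      obtain ⟨l, hl⟩ := Int.dvd_of_emod_eq_zero hd
      have : 3 * (u * k + v * l) = 1 := by rw [← huv, hk, hl]; ring
      omega
    all_goals simp [pow_two, Int.add_emod, Int.mul_emod, ha, hd]
  rcases key with h1 | h1
  · exact ⟨1, -((a ^ 2 + d ^ 2) / 3), by omega⟩
  · exact ⟨-1, (a ^ 2 + d ^ 2) / 3 + 1, by omega⟩

lemma cop_aux {a d : ℤ} (h : IsCoprime a d) : IsCoprime (a ^ 2 + d ^ 2) (4 * a ^ 2 + d ^ 2) := by
  obtain ⟨r, s, hrs⟩ := not_three_dvd_aux h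
  obtain ⟨u, v, huv⟩ : IsCoprime (a ^ 2) (d ^ 2) := h.pow
  refine ⟨r + s * (4 * v - u), s * (u - v), ?_⟩
  linear_combination hrs + 3 * s * huv

lemma core_aux {M N m n : ℤ} (h1 : M * N = m * n) (h2 : 4 * M ^ 2 - N ^ 2 = m ^ 2 - n ^ 2)
    (hc : IsCoprime m n) (h0 : M * N ≠ 0) :
    ∃ a d b c : ℤ, IsCoprime a d ∧ a ^ 2 + d ^ 2 = b ^ 2 ∧ 4 * a ^ 2 + d ^ 2 = c ^ 2 ∧
      a * d ∣ M * N := by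
  obtain ⟨a, b, ⟨c, hm⟩, ⟨d, hn⟩, hM⟩ :=
    exists_dvd_and_dvd_of_dvd_mul (Dvd.intro N h1 : M ∣ m * n)
  have hM0 : M ≠ 0 := left_ne_zero_of_mul h0
  have hN : N = c * d := by
    apply mul_left_cancel₀ hM0
    rw [h1, hm, hn, hM]; ring
  have had : IsCoprime a d := (hc.of_isCoprime_of_dvd_left ⟨c, hm⟩).of_isCoprime_of_dvd_right
    ⟨b, by rw [hn]; ring⟩
  have hcb : IsCoprime c b := (hc.of_isCoprime_of_dvd_left ⟨a, by rw [hm]; ring⟩).of_isCoprime_of_dvd_right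
    ⟨d, hn⟩
  have hXY := cop_aux had
  have e : b ^ 2 * (4 * a ^ 2 + d ^ 2) = c ^ 2 * (a ^ 2 + d ^ 2) := by
    rw [hM, hN, hm, hn] at h2
    linear_combination h2
  have hcb2 : IsCoprime (c ^ 2) (b ^ 2) := hcb.pow
  refine ⟨a, d, b, c, had, ?_, ?_, ⟨b * c, by rw [hM, hN]; ring⟩⟩
  · apply Int.dvd_antisymm (by positivity) (by positivity)
    · exact hXY.dvd_of_dvd_mul_right (Dvd.intro_left _ e.symm)
    · exact hcb2.symm.dvd_of_dvd_mul_left (Dvd.intro _ e)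
  · apply Int.dvd_antisymm (by positivity) (by positivity)
    · exact hXY.symm.dvd_of_dvd_mul_right (Dvd.intro_left _ e)
    · exact hcb2.dvd_of_dvd_mul_left (Dvd.intro _ e.symm)

lemma descent_aux : ∀ (k : ℕ) (x y s t : ℤ), (x * y).natAbs = k → IsCoprime x y →
    x ^ 2 + y ^ 2 = s ^ 2 → x ^ 2 + 4 * y ^ 2 = t ^ 2 → x * y = 0 := by
  intro k
  induction k using Nat.strong_induction_on with
  | _ k ih =>
  intro x y s t hk hc hs ht
  by_contra h0
  have hx0 : x ≠ 0 := left_ne_zero_of_mul h0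
  have hy0 : y ≠ 0 := right_ne_zero_of_mul h0
  rcases Int.emod_two_eq_zero_or_one x with hx | hx
  · obtain ⟨x', rfl⟩ := Int.dvd_of_emod_eq_zero hx
    have htev : t % 2 = 0 := by
      rcases Int.emod_two_eq_zero_or_one t with h | h
      · exact h
      · exfalso
        have h3 : t ^ 2 % 2 = 1 := by simp [pow_two, Int.mul_emod, h]
        rw [← ht] at h3
        ring_nf at h3
        omega
    obtain ⟨t', rfl⟩ := Int.dvd_of_emod_eq_zero htev
    have h1 : y * x' ≠ 0 := mul_ne_zero hy0 (by rintro rfl; simp at hx0)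
    refine h1 (ih (y * x').natAbs ?_ y x' t' s rfl ?_ ?_ ?_)
    · rw [← hk, show 2 * x' * y = 2 * (y * x') by ring]; omega
    · exact (hc.of_isCoprime_of_dvd_left ⟨2, by ring⟩).symm
    · linarith
    · linarith
  · have hs0 : s ≠ 0 := by rintro rfl; have := sq_pos_of_ne_zero hx0; nlinarith [sq_nonneg y]
    have ht0 : t ≠ 0 := by rintro rfl; have := sq_pos_of_ne_zero hx0; nlinarith [sq_nonneg y]
    have hx2 : IsCoprime x 2 := ⟨1, -(x / 2), by omega⟩
    have p1 : PythagoreanTriple x y |s| := by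
      unfold PythagoreanTriple; rw [abs_mul_abs_self]; linarith
    have p2 : PythagoreanTriple x (2 * y) |t| := by
      unfold PythagoreanTriple; rw [abs_mul_abs_self]; linarith
    obtain ⟨m, n, hxm, hym, -, hmn, -, -⟩ := p1.coprime_classification'
      (Int.isCoprime_iff_gcd_eq_one.mp hc) hx (abs_pos.mpr hs0)
    obtain ⟨M, N, hxM, hyM, -, hMN, hpar, -⟩ := p2.coprime_classification'
      (Int.isCoprime_iff_gcd_eq_one.mp (hx2.mul_right hc)) hx (abs_pos.mpr ht0)
    have hmn' := Int.isCoprime_iff_gcd_eq_one.mpr hmn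
    have hyMN : y = M * N := by linarith
    have hfin : ∀ a d b c : ℤ, IsCoprime a d → a ^ 2 + d ^ 2 = b ^ 2 → 4 * a ^ 2 + d ^ 2 = c ^ 2 →
        a * d ∣ m * n → False := by
      intro a d b c had h1 h2 h3
      have hmn0 : m * n ≠ 0 := by
        intro h; apply hy0; rw [hym, mul_assoc, h]; simp
      have hle := Int.natAbs_le_of_dvd_ne_zero h3 hmn0
      have hda : d * a ≠ 0 := by
        intro h; apply hmn0; rw [mul_comm a d, h] at h3; exact zero_dvd_iff.mp h3
      refine hda (ih (d * a).natAbs ?_ d a b c rfl had.symm (by linarith) (by linarith))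
      have h5 : (x * y).natAbs = x.natAbs * (2 * (m * n).natAbs) := by
        rw [hym, Int.natAbs_mul, mul_assoc, Int.natAbs_mul 2]; rfl
      have h6 : 1 ≤ x.natAbs := Int.natAbs_pos.mpr hx0
      have h7 : 1 ≤ (m * n).natAbs := Int.natAbs_pos.mpr hmn0
      rw [← hk, h5, mul_comm d a]
      nlinarith
    rcases hpar with ⟨hM, -⟩ | ⟨-, hN⟩
    · obtain ⟨M', rfl⟩ := Int.dvd_of_emod_eq_zero hM
      have e1 : M' * N = m * n := by linarith
      obtain ⟨a, d, b, c, g1, g2, g3, g4⟩ := core_aux e1 (by linarith) hmn'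
        (by rintro h; apply hy0; rw [hyMN, mul_assoc, h]; simp)
      exact hfin a d b c g1 g2 g3 (e1 ▸ g4)
    · obtain ⟨N', rfl⟩ := Int.dvd_of_emod_eq_zero hN
      have e1 : N' * M = n * m := by linarith
      obtain ⟨a, d, b, c, g1, g2, g3, g4⟩ := core_aux e1 (by linarith) hmn'.symm
        (by rintro h; apply hy0; rw [hyMN, show M * (2 * N') = 2 * (N' * M) by ring, h]; simp)
      exact hfin a d b c g1 g2 g3 (by rw [mul_comm m n, ← e1]; exact g4)

lemma odd_sq_aux {p : ℤ} (h : p % 2 = 1) : p ^ 2 % 8 = 1 := by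
  have : p % 8 = 1 ∨ p % 8 = 3 ∨ p % 8 = 5 ∨ p % 8 = 7 := by omega
  rcases this with h | h | h | h <;> simp [pow_two, Int.mul_emod, h]

lemma even_sq_aux {p : ℤ} (h : p % 2 = 0) : p ^ 2 % 4 = 0 := by
  have : p % 4 = 0 ∨ p % 4 = 2 := by omega
  rcases this with h | h <;> simp [pow_two, Int.mul_emod, h]

lemma sq_mod_aux (p : ℤ) : p ^ 2 % 4 = 0 ∨ p ^ 2 % 4 = 1 := by
  rcases Int.emod_two_eq_zero_or_one p with h | h
  · exact Or.inl (even_sq_aux h)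
  · have := odd_sq_aux h; omega

lemma int_aux {p q z : ℤ} (hc : IsCoprime p q) (hq : 0 < q)
    (h : (p ^ 2 - 9 * q ^ 2) * (p ^ 2 - 8 * q ^ 2) * (p ^ 2 - 5 * q ^ 2) = z ^ 2) :
    p ^ 2 = 9 * q ^ 2 := by
  have hq2 : 0 < q ^ 2 := by positivity
  obtain ⟨u, v, huv⟩ : IsCoprime (p ^ 2) (q ^ 2) := hc.pow
  have cAS : IsCoprime (p ^ 2 - 9 * q ^ 2) (p ^ 2 - 8 * q ^ 2) :=
    ⟨-8 * u - v, 9 * u + v, by linear_combination huv⟩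
  have cBS : IsCoprime (p ^ 2 - 5 * q ^ 2) (p ^ 2 - 8 * q ^ 2) := by
    obtain ⟨r, s, hrs⟩ := not_three_dvd_aux hc
    have hS : IsCoprime (p ^ 2 - 8 * q ^ 2) 3 :=
      ⟨r, s + 3 * r * q ^ 2, by linear_combination hrs⟩
    obtain ⟨r, s, hrs⟩ := hS
    exact ⟨s * (8 * u + v), r + s * (-5 * u - v), by linear_combination hrs + 3 * s * huv⟩
  have odd4 : ∀ w : ℤ, w % 2 = 1 → IsCoprime w 4 := fun w hw => by
    have : w % 4 = 1 ∨ w % 4 = 3 := by omega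
    rcases this with h | h
    · exact ⟨1, -(w / 4), by omega⟩
    · exact ⟨-1, w / 4 + 1, by omega⟩
  have cAB : (p ^ 2 - 9 * q ^ 2) % 2 = 1 → IsCoprime (p ^ 2 - 9 * q ^ 2) (p ^ 2 - 5 * q ^ 2) := by
    intro hodd
    obtain ⟨r, s, hrs⟩ := odd4 _ hodd
    exact ⟨r + s * (-5 * u - v), s * (9 * u + v), by linear_combination hrs + 4 * s * huv⟩
  rcases Int.emod_two_eq_zero_or_one p with hp | hp
  · exfalso
    have hqo : q % 2 = 1 := by
      rcases Int.emod_two_eq_zero_or_one q with hq' | hq'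
      · exfalso
        have e1 := even_sq_aux hp
        have e2 := even_sq_aux hq'
        obtain ⟨k, hk⟩ := Int.dvd_of_emod_eq_zero e1
        obtain ⟨l, hl⟩ := Int.dvd_of_emod_eq_zero e2
        have : 4 * (u * k + v * l) = 1 := by rw [← huv, hk, hl]; ring
        omega
      · exact hq'
    have e1 := even_sq_aux hp
    have e2 := odd_sq_aux hqo
    have c := cAB (by omega)
    obtain ⟨b, hb⟩ := Int.sq_of_isCoprime (c.symm.mul_right cBS)
      (show (p ^ 2 - 5 * q ^ 2) * ((p ^ 2 - 9 * q ^ 2) * (p ^ 2 - 8 * q ^ 2)) = z ^ 2 by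
        rw [← h]; ring)
    rcases hb with hb | hb
    · have := sq_mod_aux b
      omega
    · have hB : p ^ 2 - 5 * q ^ 2 < 0 := by
        have : 0 ≤ b ^ 2 := sq_nonneg b
        omega
      have hS : p ^ 2 - 8 * q ^ 2 < 0 := by linarith
      have hA : p ^ 2 - 9 * q ^ 2 < 0 := by linarith
      have := mul_neg_of_pos_of_neg (mul_pos_of_neg_of_neg hA hS) hB
      rw [h] at this
      nlinarith [sq_nonneg z]
  · have e1 := odd_sq_aux hp
    obtain ⟨s, hs⟩ := Int.sq_of_isCoprime (cAS.symm.mul_right cBS.symm)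
      (show (p ^ 2 - 8 * q ^ 2) * ((p ^ 2 - 9 * q ^ 2) * (p ^ 2 - 5 * q ^ 2)) = z ^ 2 by
        rw [← h]; ring)
    have hs1 : p ^ 2 - 8 * q ^ 2 = s ^ 2 := by
      rcases hs with hs | hs
      · exact hs
      · exfalso
        have := sq_mod_aux s
        omega
    have hS : 0 < p ^ 2 - 8 * q ^ 2 := by
      have : 0 ≤ s ^ 2 := sq_nonneg s
      omega
    have hB : 0 < p ^ 2 - 5 * q ^ 2 := by linarith
    have hA : 0 ≤ p ^ 2 - 9 * q ^ 2 := by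
      by_contra hA
      push Not at hA
      have := mul_neg_of_neg_of_pos (mul_neg_of_neg_of_pos hA hS) hB
      rw [h] at this
      nlinarith [sq_nonneg z]
    have hab : ∃ a b : ℤ, p ^ 2 - 9 * q ^ 2 = a ^ 2 ∧ p ^ 2 - 5 * q ^ 2 = b ^ 2 := by
      rcases Int.emod_two_eq_zero_or_one q with hq' | hq'
      · have e2 := even_sq_aux hq'
        have c := cAB (by omega)
        obtain ⟨a, ha⟩ := Int.sq_of_isCoprime (c.mul_right cAS)
          (show (p ^ 2 - 9 * q ^ 2) * ((p ^ 2 - 5 * q ^ 2) * (p ^ 2 - 8 * q ^ 2)) = z ^ 2 by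
            rw [← h]; ring)
        obtain ⟨b, hb⟩ := Int.sq_of_isCoprime (c.symm.mul_right cBS)
          (show (p ^ 2 - 5 * q ^ 2) * ((p ^ 2 - 9 * q ^ 2) * (p ^ 2 - 8 * q ^ 2)) = z ^ 2 by
            rw [← h]; ring)
        have := sq_mod_aux a
        have := sq_mod_aux b
        exact ⟨a, b, by omega, by omega⟩
      · have e2 := odd_sq_aux hq'
        obtain ⟨A, hA'⟩ : (4 : ℤ) ∣ p ^ 2 - 9 * q ^ 2 := by omega
        obtain ⟨B, hB'⟩ : (4 : ℤ) ∣ p ^ 2 - 5 * q ^ 2 := by omega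
        have hqq : B - A = q ^ 2 := by linarith
        have hpp : 9 * B - 5 * A = p ^ 2 := by linarith
        have c : IsCoprime A B := ⟨-5 * u - v, 9 * u + v, by
          rw [← hqq, ← hpp] at huv; linear_combination huv⟩
        have cA : IsCoprime A (p ^ 2 - 8 * q ^ 2) :=
          cAS.of_isCoprime_of_dvd_left ⟨4, by rw [hA']; ring⟩
        have cB : IsCoprime B (p ^ 2 - 8 * q ^ 2) :=
          cBS.of_isCoprime_of_dvd_left ⟨4, by rw [hB']; ring⟩
        rw [hA', hB'] at h
        obtain ⟨w, hw⟩ : (4 : ℤ) ∣ z := by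
          rw [← Int.pow_dvd_pow_iff (n := 2) (by norm_num), ← h]
          exact ⟨A * (p ^ 2 - 8 * q ^ 2) * B, by ring⟩
        have h' : A * (p ^ 2 - 8 * q ^ 2) * B = w ^ 2 := by
          rw [hw] at h
          linarith
        obtain ⟨a, ha⟩ := Int.sq_of_isCoprime (c.mul_right cA)
          (show A * (B * (p ^ 2 - 8 * q ^ 2)) = w ^ 2 by rw [← h']; ring)
        obtain ⟨b, hb⟩ := Int.sq_of_isCoprime (c.symm.mul_right cB)
          (show B * (A * (p ^ 2 - 8 * q ^ 2)) = w ^ 2 by rw [← h']; ring)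
        have := sq_nonneg a
        have := sq_nonneg b
        refine ⟨2 * a, 2 * b, ?_, ?_⟩
        · rw [mul_pow]; omega
        · rw [mul_pow]; omega
    obtain ⟨a, b, ha, hb⟩ := hab
    have hcaq : IsCoprime a q := by
      have : IsCoprime (a ^ 2) (q ^ 2) := ⟨u, v + 9 * u, by rw [← ha]; linear_combination huv⟩
      exact (IsCoprime.pow_iff (by norm_num) (by norm_num)).mp this
    have := descent_aux _ a q s b rfl hcaq (by linarith) (by linarith)
    have ha0 : a = 0 := (mul_eq_zero.mp this).resolve_right hq.ne'
    rw [ha0] at ha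
    linarith

/-- Subsection 6.7: the affine rational points of the genus 2 curve
`y² = x⁶ - 22x⁴ + 157x² - 360` are exactly `(3, 0)` and `(-3, 0)`. -/
theorem stmt_19 :
    ∀ x y : ℚ,
      y ^ 2 = x ^ 6 - 22 * x ^ 4 + 157 * x ^ 2 - 360 ↔
        (x = 3 ∧ y = 0) ∨ (x = -3 ∧ y = 0) := by
  intro x y
  constructor
  · intro h
    have hd : (x.den : ℚ) ≠ 0 := by exact_mod_cast x.den_nz
    have hx : (x.num : ℚ) = x * x.den := (Rat.mul_den_eq_num x).symm
    obtain ⟨z, hz⟩ : IsSquare ((x.num ^ 2 - 9 * (x.den : ℤ) ^ 2) * (x.num ^ 2 - 8 * (x.den : ℤ) ^ 2)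
        * (x.num ^ 2 - 5 * (x.den : ℤ) ^ 2)) := by
      rw [← Rat.isSquare_intCast_iff]
      refine ⟨y * x.den ^ 3, ?_⟩
      push_cast
      rw [hx]
      linear_combination -(x.den : ℚ) ^ 6 * h
    have h1 := int_aux (p := x.num) (q := x.den) (z := z)
      (Int.isCoprime_iff_gcd_eq_one.mpr x.reduced) (by exact_mod_cast x.den_pos)
      (by rw [hz]; ring)
    have h2 : (x.num : ℚ) ^ 2 = 9 * (x.den : ℚ) ^ 2 := by exact_mod_cast h1
    have h3 : x ^ 2 = 9 := by
      rw [hx] at h2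
      apply mul_right_cancel₀ (pow_ne_zero 2 hd)
      linear_combination h2
    have hy : y = 0 := by
      have : y ^ 2 = 0 := by
        rw [h]
        linear_combination (x ^ 4 - 13 * x ^ 2 + 40) * h3
      exact pow_eq_zero_iff (by norm_num) |>.mp this
    have h4 : (x - 3) * (x + 3) = 0 := by linear_combination h3
    rcases mul_eq_zero.mp h4 with h5 | h5
    · exact Or.inl ⟨by linarith, hy⟩
    · exact Or.inr ⟨by linarith, hy⟩
  · rintro (⟨rfl, rfl⟩ | ⟨rfl, rfl⟩) <;> norm_num
end
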